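/- arXiv:1801.02331 — 8 statements merged into one kernel-verified Lean document; each statement's English description precedes it below -/
import Mathlib

section
/- Let n, m ≥ 1, let A ∈ M_n(ℝ), and let P, Q ∈ M_n(ℝ) be symmetric positive definite matrices such that AᵀP + PA + Q is negative semidefinite. Let Γ > 0 be a real number, B ∈ ℝ^{n×m}, and let e : ℝ → ℝ^n, θ̃ : ℝ → ℝ^{n×m}, x̄ : ℝ → ℝ^n be differentiable functions such that e(t) ≠ 0 for all t and, for all t, e'(t) = A e(t) + B θ̃(t)ᵀ x̄(t) and θ̃'(t) = −Γ · (x̄(t) · (e(t)ᵀ P B)) / (2 √(e(t)ᵀ P e(t))), where x̄(t) · (e(t)ᵀ P B) denotes the outer product of the column vector x̄(t) ∈ ℝ^n with the row vector e(t)ᵀPB ∈ ℝ^{1×m}. Then the function V(t) = √(e(t)ᵀ P e(t)) + Γ⁻¹‖θ̃(t)‖_F² is differentiable and satisfies, for every t, V'(t) ≤ −(1/2) · e(t)ᵀ Q e(t) / √(e(t)ᵀ P e(t)) ≤ 0. -/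
open Matrix

attribute [local instance] Matrix.normedAddCommGroup Matrix.normedSpace

/-- Proposition 1: the decoupled adaptive subsystem's Lyapunov-type function
`V(t) = √(e(t)ᵀ P e(t)) + Γ⁻¹‖θ̃(t)‖_F²` is differentiable with
`V'(t) ≤ -(1/2) eᵀQe / √(eᵀPe) ≤ 0` under the adaptive update law. -/
theorem stmt_0 (n m : ℕ) (hn : 1 ≤ n) (hm : 1 ≤ m)
    (A P Q : Matrix (Fin n) (Fin n) ℝ)
    (hPsymm : P.IsSymm)
    (hPpos : ∀ x : Fin n → ℝ, x ≠ 0 → 0 < x ⬝ᵥ P.mulVec x)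
    (hQsymm : Q.IsSymm)
    (hQpos : ∀ x : Fin n → ℝ, x ≠ 0 → 0 < x ⬝ᵥ Q.mulVec x)
    (hLyap : ∀ x : Fin n → ℝ, x ⬝ᵥ (Aᵀ * P + P * A + Q).mulVec x ≤ 0)
    (Γ : ℝ) (hΓ : 0 < Γ)
    (B : Matrix (Fin n) (Fin m) ℝ)
    (e : ℝ → Fin n → ℝ) (θ : ℝ → Matrix (Fin n) (Fin m) ℝ) (xb : ℝ → Fin n → ℝ)
    (hxb : Differentiable ℝ xb)
    (he0 : ∀ t, e t ≠ 0)
    (hde : ∀ t, HasDerivAt e (A.mulVec (e t) + B.mulVec ((θ t)ᵀ.mulVec (xb t))) t)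
    (hdθ : ∀ t, HasDerivAt θ
        ((-Γ / (2 * Real.sqrt (e t ⬝ᵥ P.mulVec (e t)))) •
          vecMulVec (xb t) (vecMul (vecMul (e t) P) B)) t) :
    Differentiable ℝ
      (fun t => Real.sqrt (e t ⬝ᵥ P.mulVec (e t)) + Γ⁻¹ * ∑ i, ∑ j, (θ t i j) ^ 2) ∧
    ∀ t,
      deriv (fun t => Real.sqrt (e t ⬝ᵥ P.mulVec (e t)) + Γ⁻¹ * ∑ i, ∑ j, (θ t i j) ^ 2) t ≤
          -(1 / 2) * (e t ⬝ᵥ Q.mulVec (e t)) / Real.sqrt (e t ⬝ᵥ P.mulVec (e t)) ∧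
      -(1 / 2) * (e t ⬝ᵥ Q.mulVec (e t)) / Real.sqrt (e t ⬝ᵥ P.mulVec (e t)) ≤ 0 := by
  have key : ∀ t, HasDerivAt
      (fun t => Real.sqrt (e t ⬝ᵥ P.mulVec (e t)) + Γ⁻¹ * ∑ i, ∑ j, (θ t i j) ^ 2)
      ((e t ⬝ᵥ (Aᵀ * P + P * A).mulVec (e t)) / (2 * Real.sqrt (e t ⬝ᵥ P.mulVec (e t)))) t := by
    intro t
    have hpos := hPpos (e t) (he0 t)
    have hs : 0 < Real.sqrt (e t ⬝ᵥ P.mulVec (e t)) := Real.sqrt_pos.mpr hpos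
    have hd := hde t
    have hdt := hdθ t
    set e' := A.mulVec (e t) + B.mulVec ((θ t)ᵀ.mulVec (xb t)) with he'
    set w := vecMul (vecMul (e t) P) B with hw
    have hei : ∀ i, HasDerivAt (fun t => e t i) (e' i) t := hasDerivAt_pi.mp hd
    have hPe : ∀ i, HasDerivAt (fun t => P.mulVec (e t) i) (P.mulVec e' i) t := by
      intro i
      simp only [mulVec, dotProduct]
      exact HasDerivAt.fun_sum fun j _ => (hei j).const_mul (P i j)
    have hq : HasDerivAt (fun t => e t ⬝ᵥ P.mulVec (e t))
        (e' ⬝ᵥ P.mulVec (e t) + e t ⬝ᵥ P.mulVec e') t := by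
      simp only [dotProduct, ← Finset.sum_add_distrib]
      exact HasDerivAt.fun_sum fun j _ => (hei j).mul (hPe j)
    have hθ : ∀ i j, HasDerivAt (fun t => θ t i j)
        ((-Γ / (2 * Real.sqrt (e t ⬝ᵥ P.mulVec (e t)))) * (xb t i * w j)) t := by
      intro i j
      exact hasDerivAt_pi.mp (hasDerivAt_pi.mp hdt i) j
    have hsum : HasDerivAt (fun t => ∑ i, ∑ j, (θ t i j) ^ 2)
        (∑ i, ∑ j, 2 * θ t i j *
          ((-Γ / (2 * Real.sqrt (e t ⬝ᵥ P.mulVec (e t)))) * (xb t i * w j))) t := by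
      refine HasDerivAt.fun_sum fun i _ => HasDerivAt.fun_sum fun j _ => ?_
      simpa using (hθ i j).fun_pow 2
    have hsum' : (∑ i, ∑ j, 2 * θ t i j *
          ((-Γ / (2 * Real.sqrt (e t ⬝ᵥ P.mulVec (e t)))) * (xb t i * w j)))
        = (-Γ / Real.sqrt (e t ⬝ᵥ P.mulVec (e t))) * (w ⬝ᵥ (θ t)ᵀ.mulVec (xb t)) := by
      simp only [dotProduct, mulVec, transpose_apply, Finset.mul_sum]
      rw [Finset.sum_comm]
      refine Finset.sum_congr rfl fun j _ => Finset.sum_congr rfl fun i _ => ?_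
      ring
    have hsym : e' ⬝ᵥ P.mulVec (e t) = e t ⬝ᵥ P.mulVec e' := by
      rw [dotProduct_comm, dotProduct_mulVec, ← mulVec_transpose, hPsymm.eq]
    have hA : e t ⬝ᵥ (Aᵀ * P + P * A).mulVec (e t)
        = 2 * (e t ⬝ᵥ P.mulVec (A.mulVec (e t))) := by
      rw [add_mulVec, dotProduct_add, ← mulVec_mulVec, ← mulVec_mulVec]
      have : e t ⬝ᵥ Aᵀ.mulVec (P.mulVec (e t)) = e t ⬝ᵥ P.mulVec (A.mulVec (e t)) := by
        rw [dotProduct_mulVec, vecMul_transpose, dotProduct_mulVec, ← mulVec_transpose,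
          hPsymm.eq, dotProduct_comm]
      rw [this]; ring
    have hB : e t ⬝ᵥ P.mulVec e' = e t ⬝ᵥ P.mulVec (A.mulVec (e t))
        + w ⬝ᵥ (θ t)ᵀ.mulVec (xb t) := by
      rw [he', mulVec_add, dotProduct_add, hw]
      congr 1
      rw [dotProduct_mulVec, dotProduct_mulVec]
    have := (hq.sqrt hpos.ne').add (hsum.const_mul Γ⁻¹)
    refine this.congr_deriv ?_
    rw [hsum', hsym, hB, hA]
    have := hs.ne'
    have := hΓ.ne'
    field_simp
    ring
  refine ⟨fun t => (key t).differentiableAt, fun t => ?_⟩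
  have hs : 0 < Real.sqrt (e t ⬝ᵥ P.mulVec (e t)) := Real.sqrt_pos.mpr (hPpos (e t) (he0 t))
  have hQ := hQpos (e t) (he0 t)
  have hL := hLyap (e t)
  rw [add_mulVec, dotProduct_add] at hL
  refine ⟨?_, ?_⟩
  · rw [(key t).deriv, ← div_div]
    apply div_le_div_of_nonneg_right _ hs.le |>.trans' 
    · exact le_of_eq rfl
    · linarith
  · exact div_nonpos_of_nonpos_of_nonneg (by linarith) hs.le
end

section
/- Let n, m ≥ 1, let A ∈ M_n(ℝ), let P, Q ∈ M_n(ℝ) be symmetric positive definite with AᵀP + PA + Q negative semidefinite, and let α, β, q > 0 be reals such that α‖x‖² ≤ xᵀPx ≤ β‖x‖² and xᵀQx ≥ q‖x‖² for all x ∈ ℝ^n. Let Γ > 0, B ∈ ℝ^{n×m}, let A_1, …, A_k ∈ M_n(ℝ), and let e : ℝ → ℝ^n, θ̃ : ℝ → ℝ^{n×m}, x̄ : ℝ → ℝ^n, e_1, …, e_k : ℝ → ℝ^n be differentiable functions with e(t) ≠ 0 for all t, satisfying e'(t) = A e(t) + B θ̃(t)ᵀ x̄(t) + Σ_{j=1}^{k}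 A_j e_j(t) and θ̃'(t) = −Γ · (x̄(t) · (e(t)ᵀ P B)) / (2 √(e(t)ᵀ P e(t))) (outer product of x̄(t) with the row vector e(t)ᵀPB). Then V(t) = √(e(t)ᵀ P e(t)) + Γ⁻¹‖θ̃(t)‖_F² satisfies, for every t, V'(t) ≤ −(q/(2√β))‖e(t)‖ + (β/√α) Σ_{j=1}^{k} ‖A_j‖ · ‖e_j(t)‖, where ‖A_j‖ denotes the operator norm of A_j on the Euclidean space ℝ^n. -/
open Matrix

attribute [local instance] Matrix.normedAddCommGroup Matrix.normedSpace

theorem aux_symm {n : ℕ} {P : Matrix (Fin n) (Fin n) ℝ} (hP : P.IsSymm) (x y : Fin n → ℝ) :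
    x ⬝ᵥ P.mulVec y = y ⬝ᵥ P.mulVec x := by
  rw [dotProduct_mulVec, dotProduct_comm, ← mulVec_transpose, hP.eq]

theorem aux_cs {n : ℕ} {P : Matrix (Fin n) (Fin n) ℝ} (hP : P.IsSymm)
    (hPpos : ∀ x : Fin n → ℝ, x ≠ 0 → 0 < x ⬝ᵥ P.mulVec x) (x y : Fin n → ℝ) (hx : x ≠ 0) :
    (x ⬝ᵥ P.mulVec y) ^ 2 ≤ (x ⬝ᵥ P.mulVec x) * (y ⬝ᵥ P.mulVec y) := by
  have ha := hPpos x hx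
  have hz : 0 ≤ ((x ⬝ᵥ P.mulVec x) • y - (x ⬝ᵥ P.mulVec y) • x) ⬝ᵥ
      P.mulVec ((x ⬝ᵥ P.mulVec x) • y - (x ⬝ᵥ P.mulVec y) • x) := by
    by_cases h : (x ⬝ᵥ P.mulVec x) • y - (x ⬝ᵥ P.mulVec y) • x = 0
    · rw [h]; simp
    · exact (hPpos _ h).le
  simp only [mulVec_sub, mulVec_smul, dotProduct_sub, sub_dotProduct, dotProduct_smul,
    smul_dotProduct, smul_eq_mul] at hz
  rw [aux_symm hP y x] at hz
  have : 0 ≤ (x ⬝ᵥ P.mulVec x) *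
      ((x ⬝ᵥ P.mulVec x) * (y ⬝ᵥ P.mulVec y) - (x ⬝ᵥ P.mulVec y) ^ 2) := by
    nlinarith [hz]
  have := nonneg_of_mul_nonneg_right this ha
  linarith

theorem aux_norm {n : ℕ} (x : Fin n → ℝ) : ‖(WithLp.toLp 2 x : EuclideanSpace ℝ (Fin n))‖ = Real.sqrt (x ⬝ᵥ x) := by
  rw [EuclideanSpace.norm_eq]
  congr 1
  simp [dotProduct, sq]

theorem aux_op {n : ℕ} (M : Matrix (Fin n) (Fin n) ℝ) (x : Fin n → ℝ) :
    Real.sqrt (M.mulVec x ⬝ᵥ M.mulVec x) ≤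
      ‖Matrix.toEuclideanCLM (𝕜 := ℝ) M‖ * Real.sqrt (x ⬝ᵥ x) := by
  rw [← aux_norm, ← aux_norm, ← Matrix.toEuclideanCLM_toLp]
  exact ContinuousLinearMap.le_opNorm _ _

theorem aux_deriv {n : ℕ} {P : Matrix (Fin n) (Fin n) ℝ} (hP : P.IsSymm) (e : ℝ → Fin n → ℝ)
    (d : Fin n → ℝ) (t : ℝ) (h : HasDerivAt e d t) :
    HasDerivAt (fun t => e t ⬝ᵥ P.mulVec (e t)) (2 * (e t ⬝ᵥ P.mulVec d)) t := by
  have hc := hasDerivAt_pi.1 h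
  have h1 : HasDerivAt (fun t => ∑ i, e t i * ∑ j, P i j * e t j)
      (∑ i, (d i * (∑ j, P i j * e t j) + e t i * ∑ j, P i j * d j)) t :=
    HasDerivAt.fun_sum fun i _ => (hc i).mul
      (HasDerivAt.fun_sum fun j _ => (hc j).const_mul (P i j))
  have h2 : 2 * (e t ⬝ᵥ P.mulVec d) = d ⬝ᵥ P.mulVec (e t) + e t ⬝ᵥ P.mulVec d := by
    rw [aux_symm hP d]; ring
  rw [h2]
  rw [Finset.sum_add_distrib] at h1
  exact h1

/-- The key differential inequality (29) in the proof of Theorem 1: for an adaptive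
subsystem coupled to neighbouring error signals `e j` through interconnection matrices
`Aint j`, the Lyapunov-type function `V = √(eᵀPe) + Γ⁻¹‖θ̃‖_F²` satisfies
`V' ≤ -(q/(2√β))‖e‖ + (β/√α) Σ_j ‖A_j‖‖e_j‖`. -/
theorem stmt_1 (n m k : ℕ) (hn : 1 ≤ n) (hm : 1 ≤ m)
    (A P Q : Matrix (Fin n) (Fin n) ℝ)
    (hPsymm : P.IsSymm)
    (hPpos : ∀ x : Fin n → ℝ, x ≠ 0 → 0 < x ⬝ᵥ P.mulVec x)
    (hQsymm : Q.IsSymm)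
    (hQpos : ∀ x : Fin n → ℝ, x ≠ 0 → 0 < x ⬝ᵥ Q.mulVec x)
    (hLyap : ∀ x : Fin n → ℝ, x ⬝ᵥ (Aᵀ * P + P * A + Q).mulVec x ≤ 0)
    (α β q : ℝ) (hα : 0 < α) (hβ : 0 < β) (hq : 0 < q)
    (hPlow : ∀ x : Fin n → ℝ, α * (x ⬝ᵥ x) ≤ x ⬝ᵥ P.mulVec x)
    (hPhigh : ∀ x : Fin n → ℝ, x ⬝ᵥ P.mulVec x ≤ β * (x ⬝ᵥ x))
    (hQlow : ∀ x : Fin n → ℝ, q * (x ⬝ᵥ x) ≤ x ⬝ᵥ Q.mulVec x)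
    (Γ : ℝ) (hΓ : 0 < Γ)
    (B : Matrix (Fin n) (Fin m) ℝ)
    (Aint : Fin k → Matrix (Fin n) (Fin n) ℝ)
    (e : ℝ → Fin n → ℝ) (θ : ℝ → Matrix (Fin n) (Fin m) ℝ) (xb : ℝ → Fin n → ℝ)
    (ej : Fin k → ℝ → Fin n → ℝ)
    (hxb : Differentiable ℝ xb)
    (hej : ∀ j, Differentiable ℝ (ej j))
    (he0 : ∀ t, e t ≠ 0)
    (hde : ∀ t, HasDerivAt e
        (A.mulVec (e t) + B.mulVec ((θ t)ᵀ.mulVec (xb t)) +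
          ∑ j, (Aint j).mulVec (ej j t)) t)
    (hdθ : ∀ t, HasDerivAt θ
        ((-Γ / (2 * Real.sqrt (e t ⬝ᵥ P.mulVec (e t)))) •
          vecMulVec (xb t) (vecMul (vecMul (e t) P) B)) t) :
    ∀ t, ∃ v : ℝ,
      HasDerivAt
        (fun t => Real.sqrt (e t ⬝ᵥ P.mulVec (e t)) + Γ⁻¹ * ∑ i, ∑ j, (θ t i j) ^ 2) v t ∧
      v ≤ -(q / (2 * Real.sqrt β)) * Real.sqrt (e t ⬝ᵥ e t) +
          (β / Real.sqrt α) *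
            ∑ j, ‖Matrix.toEuclideanCLM (𝕜 := ℝ) (Aint j)‖ * Real.sqrt (ej j t ⬝ᵥ ej j t) := by
  intro t
  have hc : ∀ i j, HasDerivAt (fun t => θ t i j)
      ((-Γ / (2 * Real.sqrt (e t ⬝ᵥ P.mulVec (e t)))) *
        (xb t i * (vecMul (vecMul (e t) P) B) j)) t := fun i j =>
    hasDerivAt_pi.1 (hasDerivAt_pi.1 (hdθ t) i) j
  have hS := hPpos (e t) (he0 t)
  have hs : 0 < Real.sqrt (e t ⬝ᵥ P.mulVec (e t)) := Real.sqrt_pos.2 hS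
  have hV1 := (aux_deriv hPsymm e _ t (hde t)).sqrt hS.ne'
  have hV2 : HasDerivAt (fun t => ∑ i, ∑ j, (θ t i j) ^ 2) _ t :=
    HasDerivAt.fun_sum fun i _ => HasDerivAt.fun_sum fun j _ => (hc i j).pow 2
  refine ⟨_, hV1.add (hV2.const_mul Γ⁻¹), ?_⟩
  set s := Real.sqrt (e t ⬝ᵥ P.mulVec (e t)) with hsdef
  have hss : s ^ 2 = e t ⬝ᵥ P.mulVec (e t) := Real.sq_sqrt hS.le
  set r := Real.sqrt (e t ⬝ᵥ e t) with hrdef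
  have hee : 0 ≤ e t ⬝ᵥ e t := Finset.sum_nonneg fun i _ => mul_self_nonneg (e t i)
  have hrr : r ^ 2 = e t ⬝ᵥ e t := Real.sq_sqrt hee
  have hr0 : 0 ≤ r := Real.sqrt_nonneg _
  -- the adaptive terms cancel
  have hcr : (vecMul (vecMul (e t) P) B) ⬝ᵥ ((θ t)ᵀ.mulVec (xb t)) =
      ∑ i, ∑ j, θ t i j * (xb t i * (vecMul (vecMul (e t) P) B) j) := by
    rw [Finset.sum_comm]
    simp only [dotProduct, mulVec, Matrix.transpose_apply, Finset.mul_sum]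
    exact Finset.sum_congr rfl fun i _ => Finset.sum_congr rfl fun j _ => by ring
  have hth : Γ⁻¹ * ∑ i, ∑ j, (((2 : ℕ) : ℝ) * θ t i j ^ (2 - 1) *
      (-Γ / (2 * s) * (xb t i * (vecMul (vecMul (e t) P) B) j))) =
      - ((vecMul (vecMul (e t) P) B) ⬝ᵥ ((θ t)ᵀ.mulVec (xb t))) / s := by
    rw [hcr, neg_div s, Finset.sum_div, ← Finset.sum_neg_distrib, Finset.mul_sum]
    refine Finset.sum_congr rfl fun i _ => ?_
    rw [Finset.sum_div, ← Finset.sum_neg_distrib, Finset.mul_sum]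
    refine Finset.sum_congr rfl fun j _ => ?_
    norm_num
    field_simp
  rw [hth]
  have hB : e t ⬝ᵥ P.mulVec (B.mulVec ((θ t)ᵀ.mulVec (xb t))) =
      (vecMul (vecMul (e t) P) B) ⬝ᵥ ((θ t)ᵀ.mulVec (xb t)) := by
    rw [dotProduct_mulVec, dotProduct_mulVec]
  rw [mulVec_add, mulVec_add, dotProduct_add, dotProduct_add, hB]
  have hsum : e t ⬝ᵥ P.mulVec (∑ j, (Aint j).mulVec (ej j t)) =
      ∑ j, e t ⬝ᵥ P.mulVec ((Aint j).mulVec (ej j t)) := by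
    rw [mulVec_sum, dotProduct_sum]
  rw [hsum]
  -- the Lyapunov term
  have hL : e t ⬝ᵥ P.mulVec (A.mulVec (e t)) ≤ - (q / 2) * r ^ 2 := by
    have h1 := hLyap (e t)
    have h2 := hQlow (e t)
    rw [add_mulVec, add_mulVec, dotProduct_add, dotProduct_add, ← mulVec_mulVec,
      ← mulVec_mulVec] at h1
    have h3 : e t ⬝ᵥ Aᵀ.mulVec (P.mulVec (e t)) = e t ⬝ᵥ P.mulVec (A.mulVec (e t)) := by
      rw [dotProduct_mulVec, vecMul_transpose, aux_symm hPsymm]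
    rw [h3] at h1
    rw [hrr]
    linarith
  have hsb : s ≤ Real.sqrt β * r := by
    rw [hsdef, hrdef, ← Real.sqrt_mul hβ.le]
    exact Real.sqrt_le_sqrt (hPhigh _)
  have hbpos : 0 < Real.sqrt β := Real.sqrt_pos.2 hβ
  have hapos : 0 < Real.sqrt α := Real.sqrt_pos.2 hα
  have hL2 : e t ⬝ᵥ P.mulVec (A.mulVec (e t)) / s ≤ -(q / (2 * Real.sqrt β)) * r := by
    rw [div_le_iff₀ hs]
    have h4 : q / (2 * Real.sqrt β) * r * s ≤ q / (2 * Real.sqrt β) * r * (Real.sqrt β * r) :=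
      mul_le_mul_of_nonneg_left hsb (by positivity)
    have h5 : q / (2 * Real.sqrt β) * r * (Real.sqrt β * r) = q / 2 * r ^ 2 := by
      field_simp
    linarith
  have hrpos : 0 < e t ⬝ᵥ e t := by
    exact pos_of_mul_pos_right (hS.trans_le (hPhigh (e t))) hβ.le
  have hab : α ≤ β :=
    le_of_mul_le_mul_right ((hPlow (e t)).trans (hPhigh (e t))) hrpos
  have hbb : Real.sqrt β ≤ β / Real.sqrt α := by
    rw [le_div_iff₀ hapos]
    calc Real.sqrt β * Real.sqrt α ≤ Real.sqrt β * Real.sqrt β :=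
          mul_le_mul_of_nonneg_left (Real.sqrt_le_sqrt hab) hbpos.le
      _ = β := Real.mul_self_sqrt hβ.le
  have hI : (∑ j, e t ⬝ᵥ P.mulVec ((Aint j).mulVec (ej j t))) / s ≤ (β / Real.sqrt α) *
      ∑ j, ‖Matrix.toEuclideanCLM (𝕜 := ℝ) (Aint j)‖ * Real.sqrt (ej j t ⬝ᵥ ej j t) := by
    rw [Finset.sum_div, Finset.mul_sum]
    refine Finset.sum_le_sum fun j _ => ?_
    set y := (Aint j).mulVec (ej j t) with hy
    have h1 : e t ⬝ᵥ P.mulVec y ≤ s * Real.sqrt (y ⬝ᵥ P.mulVec y) := by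
      rw [hsdef, ← Real.sqrt_mul hS.le]
      exact Real.le_sqrt_of_sq_le (aux_cs hPsymm hPpos _ _ (he0 t))
    have h2 : Real.sqrt (y ⬝ᵥ P.mulVec y) ≤ Real.sqrt β * Real.sqrt (y ⬝ᵥ y) := by
      rw [← Real.sqrt_mul hβ.le]
      exact Real.sqrt_le_sqrt (hPhigh _)
    have h3 := aux_op (Aint j) (ej j t)
    rw [← hy] at h3
    calc e t ⬝ᵥ P.mulVec y / s ≤ Real.sqrt (y ⬝ᵥ P.mulVec y) := by
          rw [div_le_iff₀ hs]; linarith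
      _ ≤ Real.sqrt β * Real.sqrt (y ⬝ᵥ y) := h2
      _ ≤ _ := mul_le_mul hbb h3 (Real.sqrt_nonneg _) (by positivity)
  refine le_trans (le_of_eq ?_) (add_le_add hL2 hI)
  field_simp
  ring
end

section
/- Let n ≥ 1, let A ∈ M_n(ℝ) be Hurwitz, let N > 0 and Ξ > 0 be real numbers, and suppose that for every ω ∈ ℝ, σ_min(A − iωI) > Ξ√N, where A is regarded as a complex n×n matrix. Then there exist a real number ε > 0 and a symmetric positive definite matrix P ∈ M_n(ℝ) such that AᵀP + PA + N·P² + (Ξ² + ε)·I = 0. -/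
open Matrix

/-- A real square matrix is Hurwitz if every eigenvalue of it, regarded as a complex
matrix, has strictly negative real part. -/
def IsHurwitz {n : ℕ} (A : Matrix (Fin n) (Fin n) ℝ) : Prop :=
  ∀ μ ∈ spectrum ℂ (A.map Complex.ofReal), μ.re < 0

/-- The smallest singular value of a complex matrix: the infimum of `‖M v‖` over
unit vectors `v ∈ ℂ^n`. -/
noncomputable def sigmaMin {n : ℕ} (M : Matrix (Fin n) (Fin n) ℂ) : ℝ :=
  sInf {r : ℝ | ∃ v : EuclideanSpace ℂ (Fin n), ‖v‖ = 1 ∧ r = ‖Matrix.toEuclideanLin M v‖}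

section Helpers
open scoped Topology Matrix.Norms.Operator
open Filter

/-- Spectrum membership via eigenvectors. -/
lemma mem_spec_iff_eigvec {n : ℕ} (M : Matrix (Fin n) (Fin n) ℂ) (μ : ℂ) :
    μ ∈ spectrum ℂ M ↔ ∃ v : Fin n → ℂ, v ≠ 0 ∧ M *ᵥ v = μ • v := by
  rw [Matrix.mem_spectrum_iff_isRoot_charpoly, Polynomial.IsRoot, Matrix.eval_charpoly,
    ← Matrix.exists_mulVec_eq_zero_iff]
  constructor
  · rintro ⟨v, hv, h⟩
    refine ⟨v, hv, ?_⟩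
    rw [Matrix.sub_mulVec, sub_eq_zero] at h
    rw [← h]; ext i; simp [Matrix.mulVec_diagonal, Matrix.scalar_apply]
  · rintro ⟨v, hv, h⟩
    refine ⟨v, hv, ?_⟩
    rw [Matrix.sub_mulVec, sub_eq_zero, h]
    ext i; simp [Matrix.mulVec_diagonal, Matrix.scalar_apply]

/-- Powers of a matrix with spectrum in the open unit disc tend to zero. -/
lemma pow_tendsto_zero_of_spec {n : ℕ} (hn : 1 ≤ n) (M : Matrix (Fin n) (Fin n) ℂ)
    (h : ∀ μ ∈ spectrum ℂ M, ‖μ‖ < 1) : Tendsto (fun k : ℕ => M ^ k) atTop (𝓝 0) := by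
  have : Nonempty (Fin n) := ⟨⟨0, hn⟩⟩
  have : CompleteSpace (Matrix (Fin n) (Fin n) ℂ) := FiniteDimensional.complete ℂ _
  have h1 : spectralRadius ℂ M < ((1 : NNReal) : ENNReal) :=
    spectrum.spectralRadius_lt_of_forall_lt M (fun μ hμ => by
      have := h μ hμ
      exact_mod_cast this)
  obtain ⟨r, hr1, hr2⟩ := ENNReal.lt_iff_exists_nnreal_btwn.1 h1
  have h2 := spectrum.pow_nnnorm_pow_one_div_tendsto_nhds_spectralRadius M
  have h3 := h2.eventually (gt_mem_nhds hr1)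
  have hr3 : (r : ℝ) < 1 := by exact_mod_cast hr2
  refine squeeze_zero_norm' (a := fun k : ℕ => (r : ℝ) ^ k) ?_
    (tendsto_pow_atTop_nhds_zero_of_lt_one r.2 hr3)
  filter_upwards [h3, eventually_ge_atTop 1] with k hk hk1
  have hk0 : (0 : ℝ) < k := by exact_mod_cast hk1
  have h4 := ENNReal.rpow_le_rpow hk.le hk0.le
  rw [← ENNReal.rpow_mul, one_div_mul_cancel hk0.ne', ENNReal.rpow_one, ENNReal.rpow_natCast] at h4
  exact_mod_cast h4

lemma map_mulVec_ofReal {n : ℕ} (A : Matrix (Fin n) (Fin n) ℝ) (z : Fin n → ℝ) :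
    A.map Complex.ofReal *ᵥ (fun i => (z i : ℂ)) = fun i => ((A *ᵥ z) i : ℂ) := by
  ext i; simp [Matrix.mulVec, dotProduct]

lemma map_mul_ofReal {n : ℕ} (A B : Matrix (Fin n) (Fin n) ℝ) :
    (A * B).map Complex.ofReal = A.map Complex.ofReal * B.map Complex.ofReal := by
  ext i j; simp [Matrix.mul_apply]

lemma map_pow_ofReal {n : ℕ} (A : Matrix (Fin n) (Fin n) ℝ) (k : ℕ) :
    (A ^ k).map Complex.ofReal = A.map Complex.ofReal ^ k := by
  induction k with
  | zero => ext i j; simp [Matrix.one_apply]; split_ifs <;> simp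
  | succ k ih => rw [pow_succ, pow_succ, map_mul_ofReal, ih]

/-- Cayley transform of a Hurwitz matrix. -/
lemma exists_cayley {n : ℕ} (hn : 1 ≤ n) (A : Matrix (Fin n) (Fin n) ℝ) (hA : IsHurwitz A) :
    ∃ C B : Matrix (Fin n) (Fin n) ℝ, (1 - A) * B = 1 ∧ B * (1 - A) = 1 ∧ C * (1 - A) = 1 + A ∧
      Tendsto (fun k : ℕ => C ^ k) atTop (𝓝 0) := by
  have hdet : (1 - A).det ≠ 0 := by
    intro h0
    obtain ⟨v, hv, h⟩ := Matrix.exists_mulVec_eq_zero_iff.2 h0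
    rw [Matrix.sub_mulVec, sub_eq_zero, Matrix.one_mulVec] at h
    have := hA 1 ((mem_spec_iff_eigvec _ _).2 ⟨fun i => (v i : ℂ), ?_, ?_⟩)
    · norm_num at this
    · intro h; apply hv; ext i; simpa using congrFun h i
    · rw [map_mulVec_ofReal, ← h, one_smul]
  have hu : IsUnit (1 - A).det := isUnit_iff_ne_zero.2 hdet
  have hB1 := Matrix.mul_nonsing_inv _ hu
  have hB2 := Matrix.nonsing_inv_mul _ hu
  have hC : ((1 + A) * (1 - A)⁻¹) * (1 - A) = 1 + A := by rw [mul_assoc, hB2, mul_one]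
  refine ⟨(1 + A) * (1 - A)⁻¹, (1 - A)⁻¹, hB1, hB2, hC, ?_⟩
  set C := (1 + A) * (1 - A)⁻¹ with hCdef
  have hone : (1 : Matrix (Fin n) (Fin n) ℝ).map Complex.ofReal = 1 := by
    simp
  have hsub : (1 - A).map Complex.ofReal = 1 - A.map Complex.ofReal := by
    rw [Matrix.map_sub _ (by simp), hone]
  have hadd : (1 + A).map Complex.ofReal = 1 + A.map Complex.ofReal := by
    rw [Matrix.map_add _ (by simp), hone]
  have hcpow : Tendsto (fun k : ℕ => (C.map Complex.ofReal) ^ k) atTop (𝓝 0) := by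
    apply pow_tendsto_zero_of_spec hn
    intro lam hlam
    obtain ⟨v, hv, hCv⟩ := (mem_spec_iff_eigvec _ _).1 hlam
    set z := ((1 - A)⁻¹).map Complex.ofReal *ᵥ v with hz
    have hvz : v = (1 - A.map Complex.ofReal) *ᵥ z := by
      rw [hz, Matrix.mulVec_mulVec, ← hsub, ← map_mul_ofReal, hB1, hone, Matrix.one_mulVec]
    have hz0 : z ≠ 0 := by
      intro h; apply hv; rw [hvz, h, Matrix.mulVec_zero]
    have h1 : (1 + A.map Complex.ofReal) *ᵥ z = lam • ((1 - A.map Complex.ofReal) *ᵥ z) := by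
      rw [← hvz, ← hCv, ← hadd, ← hC, map_mul_ofReal, ← Matrix.mulVec_mulVec, hsub, ← hvz]
    rw [Matrix.add_mulVec, Matrix.sub_mulVec, Matrix.one_mulVec] at h1
    have h2 : (1 + lam) • (A.map Complex.ofReal *ᵥ z) = (lam - 1) • z := by
      ext i
      have := congrFun h1 i
      simp only [Pi.add_apply, Pi.smul_apply, Pi.sub_apply, smul_eq_mul] at this ⊢
      linear_combination this
    have hl : 1 + lam ≠ 0 := by
      intro h
      rw [h, zero_smul] at h2
      have : lam - 1 ≠ 0 := by
        intro h'
        have : (2 : ℂ) = 0 := by linear_combination h - h'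
        norm_num at this
      exact hz0 ((smul_eq_zero.1 h2.symm).resolve_left this)
    have h3 := hA ((lam - 1) / (1 + lam)) ((mem_spec_iff_eigvec _ _).2 ⟨z, hz0, by
      rw [div_eq_inv_mul, mul_smul, ← h2, smul_smul, inv_mul_cancel₀ hl, one_smul]⟩)
    rw [Complex.div_re, ← add_div] at h3
    have hpos : 0 < Complex.normSq (1 + lam) := Complex.normSq_pos.2 hl
    have h4 := (div_neg_iff.1 h3).resolve_left (fun h => absurd h.2 (not_lt.2 hpos.le))
    have h5 := h4.1
    simp at h5
    rw [← sq_lt_one_iff₀ (norm_nonneg _), ← Complex.normSq_eq_norm_sq, Complex.normSq_apply]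
    nlinarith
  have hre : Continuous (fun M : Matrix (Fin n) (Fin n) ℂ => M.map Complex.re) :=
    Continuous.matrix_map continuous_id Complex.continuous_re
  have h := (hre.tendsto 0).comp hcpow
  have h0 : (0 : Matrix (Fin n) (Fin n) ℂ).map Complex.re = 0 := by ext i j; simp
  rw [h0] at h
  refine h.congr ?_
  intro k
  ext i j
  simp [← map_pow_ofReal]

/-- Injectivity of the Lyapunov operator. -/
lemma lyap_inj {n : ℕ} (hn : 1 ≤ n) (A : Matrix (Fin n) (Fin n) ℝ) (hA : IsHurwitz A)
    (X : Matrix (Fin n) (Fin n) ℝ) (hX : Aᵀ * X + X * A = 0) : X = 0 := by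
  obtain ⟨C, B, hB1, hB2, hC, hlim⟩ := exists_cayley hn A hA
  have hB3 : Bᵀ * (1 - A)ᵀ = 1 := by rw [← Matrix.transpose_mul, hB1, Matrix.transpose_one]
  have hCB : C = (1 + A) * B := by rw [← hC, mul_assoc, hB1, mul_one]
  have h1 : (1 + A)ᵀ * X * (1 + A) = (1 - A)ᵀ * X * (1 - A) := by
    rw [Matrix.transpose_add, Matrix.transpose_sub, Matrix.transpose_one, ← sub_eq_zero]
    have : (1 + Aᵀ) * X * (1 + A) - (1 - Aᵀ) * X * (1 - A) = (2 : ℕ) • (Aᵀ * X + X * A) := by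
      noncomm_ring
    rw [this, hX, smul_zero]
  have h2 : Cᵀ * X * C = X := by
    calc Cᵀ * X * C = Bᵀ * ((1 + A)ᵀ * X * (1 + A)) * B := by
          rw [hCB, Matrix.transpose_mul]; noncomm_ring
      _ = (Bᵀ * (1 - A)ᵀ) * X * ((1 - A) * B) := by rw [h1]; simp only [mul_assoc]
      _ = X := by rw [hB3, hB1]; simp
  have h3 : ∀ k : ℕ, (C ^ k)ᵀ * X * C ^ k = X := by
    intro k
    induction k with
    | zero => simp
    | succ k ih =>
      calc (C ^ (k+1))ᵀ * X * C ^ (k+1) = Cᵀ * ((C ^ k)ᵀ * X * C ^ k) * C := by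
            conv_lhs => rw [pow_succ, Matrix.transpose_mul]
            simp only [mul_assoc]
        _ = X := by rw [ih, h2]
  have hcont : Continuous (fun M : Matrix (Fin n) (Fin n) ℝ => Mᵀ * X * M) := by fun_prop
  have h4 := (hcont.tendsto 0).comp hlim
  have h5 : Tendsto (fun k : ℕ => X) atTop (𝓝 (0ᵀ * X * 0)) := h4.congr h3
  simpa using tendsto_nhds_unique h5 tendsto_const_nhds |>.symm

/-- Lyapunov's theorem: positivity. -/
lemma lyap_pos {n : ℕ} (hn : 1 ≤ n) (A : Matrix (Fin n) (Fin n) ℝ) (hA : IsHurwitz A)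
    (P : Matrix (Fin n) (Fin n) ℝ)
    (hP : ∀ x : Fin n → ℝ, x ≠ 0 → x ⬝ᵥ ((Aᵀ * P + P * A) *ᵥ x) < 0)
    (x : Fin n → ℝ) (hx : x ≠ 0) : 0 < x ⬝ᵥ P *ᵥ x := by
  obtain ⟨C, B, hB1, hB2, hC, hlim⟩ := exists_cayley hn A hA
  have key : ∀ y : Fin n → ℝ, y ≠ 0 → (C *ᵥ y) ⬝ᵥ P *ᵥ (C *ᵥ y) < y ⬝ᵥ P *ᵥ y := by
    intro y hy
    set z := B *ᵥ y with hz
    have hyz : y = (1 - A) *ᵥ z := by rw [hz, Matrix.mulVec_mulVec, hB1, Matrix.one_mulVec]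
    have hz0 : z ≠ 0 := by intro h; apply hy; rw [hyz, h, Matrix.mulVec_zero]
    have hCy : C *ᵥ y = (1 + A) *ᵥ z := by rw [hyz, Matrix.mulVec_mulVec, hC]
    have h := hP z hz0
    rw [hCy, hyz]
    have e1 : z ⬝ᵥ (Aᵀ * P + P * A) *ᵥ z = (A *ᵥ z) ⬝ᵥ P *ᵥ z + z ⬝ᵥ P *ᵥ (A *ᵥ z) := by
      rw [Matrix.add_mulVec, dotProduct_add, ← Matrix.mulVec_mulVec, ← Matrix.mulVec_mulVec,
        Matrix.dotProduct_mulVec z Aᵀ, Matrix.vecMul_transpose]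
    rw [e1] at h
    simp only [Matrix.add_mulVec, Matrix.sub_mulVec, Matrix.one_mulVec, Matrix.mulVec_add,
      Matrix.mulVec_sub, dotProduct_add, dotProduct_sub, add_dotProduct, sub_dotProduct]
    linarith
  have hle : ∀ y : Fin n → ℝ, (C *ᵥ y) ⬝ᵥ P *ᵥ (C *ᵥ y) ≤ y ⬝ᵥ P *ᵥ y := by
    intro y
    by_cases hy : y = 0
    · simp [hy]
    · exact (key y hy).le
  have hk : ∀ k : ℕ, (C ^ k *ᵥ (C *ᵥ x)) ⬝ᵥ P *ᵥ (C ^ k *ᵥ (C *ᵥ x))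
      ≤ (C *ᵥ x) ⬝ᵥ P *ᵥ (C *ᵥ x) := by
    intro k
    induction k with
    | zero => simp
    | succ k ih =>
      rw [pow_succ', ← Matrix.mulVec_mulVec _ C]
      exact (hle _).trans ih
  have hcont : Continuous (fun M : Matrix (Fin n) (Fin n) ℝ =>
      (M *ᵥ (C *ᵥ x)) ⬝ᵥ P *ᵥ (M *ᵥ (C *ᵥ x))) := by fun_prop
  have h4 := (hcont.tendsto 0).comp hlim
  have h5 := le_of_tendsto h4 (Eventually.of_forall hk)
  simp only [Matrix.zero_mulVec, zero_dotProduct] at h5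
  exact h5.trans_lt (key x hx)

lemma continuous_map_ofReal {n : ℕ} :
    Continuous (fun M : Matrix (Fin n) (Fin n) ℝ => M.map Complex.ofReal) :=
  Continuous.matrix_map continuous_id Complex.continuous_ofReal

/-- The Hurwitz matrices form an open set. -/
lemma hurwitz_eventually {n : ℕ} (A : Matrix (Fin n) (Fin n) ℝ) (hA : IsHurwitz A) :
    ∀ᶠ M in 𝓝 A, IsHurwitz M := by
  have : CompleteSpace (Matrix (Fin n) (Fin n) ℂ) := FiniteDimensional.complete ℂ _
  have hU : IsOpen {z : ℂ | z.re < 0} := isOpen_lt Complex.continuous_re continuous_const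
  have h1 : {z : ℂ | z.re < 0} ∈ nhdsSet (spectrum ℂ (A.map Complex.ofReal)) :=
    hU.mem_nhdsSet.2 (fun μ hμ => hA μ hμ)
  have h2 := (upperHemicontinuous_spectrum ℂ (Matrix (Fin n) (Fin n) ℂ)).upperHemicontinuousAt
    (A.map Complex.ofReal) _ h1
  have h3 := (continuous_map_ofReal.tendsto A).eventually h2
  filter_upwards [h3] with M hM
  exact fun μ hμ => subset_of_mem_nhdsSet hM hμ

/-- Limits of Hurwitz matrices have spectrum in the closed left half plane. -/
lemma hurwitz_limit {n : ℕ} (A : ℕ → Matrix (Fin n) (Fin n) ℝ) (hA : ∀ k, IsHurwitz (A k))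
    (B : Matrix (Fin n) (Fin n) ℝ) (hlim : Tendsto A atTop (𝓝 B)) :
    ∀ μ ∈ spectrum ℂ (B.map Complex.ofReal), μ.re ≤ 0 := by
  intro μ hμ
  by_contra! hpos
  rw [Matrix.mem_spectrum_iff_isRoot_charpoly, Polynomial.IsRoot, Matrix.eval_charpoly] at hμ
  have hcont : Continuous (fun M : Matrix (Fin n) (Fin n) ℝ =>
      ‖(Matrix.scalar (Fin n) μ - M.map Complex.ofReal).det‖) :=
    (Continuous.matrix_det (continuous_const.sub continuous_map_ofReal)).norm
  have h1 := (hcont.tendsto B).comp hlim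
  have h2 : ∀ k, μ.re ^ n ≤ ‖(Matrix.scalar (Fin n) μ - (A k).map Complex.ofReal).det‖ := by
    intro k
    have hs : ((A k).map Complex.ofReal).charpoly.Splits := IsAlgClosed.splits _
    rw [← Matrix.eval_charpoly, hs.eval_eq_prod_roots_of_monic (Matrix.charpoly_monic _)]
    have hcard : ((A k).map Complex.ofReal).charpoly.roots.card = n := by
      rw [← hs.natDegree_eq_card_roots, Matrix.charpoly_natDegree_eq_dim, Fintype.card_fin]
    have hre : ∀ r ∈ ((A k).map Complex.ofReal).charpoly.roots, r.re < 0 := by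
      intro r hr
      exact hA k r (Matrix.mem_spectrum_iff_isRoot_charpoly.2 (Polynomial.isRoot_of_mem_roots hr))
    have aux : ∀ s : Multiset ℂ, (∀ r ∈ s, r.re < 0) →
        μ.re ^ s.card ≤ ‖(s.map (fun r => μ - r)).prod‖ := by
      intro s
      induction s using Multiset.induction with
      | empty => simp
      | cons a s ih =>
        intro h
        rw [Multiset.card_cons, Multiset.map_cons, Multiset.prod_cons, norm_mul, pow_succ']
        have ha := h a (Multiset.mem_cons_self a s)
        have h1 : μ.re ≤ ‖μ - a‖ := by
          refine le_trans ?_ (Complex.re_le_norm _)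
          simp; linarith
        exact mul_le_mul h1 (ih (fun r hr => h r (Multiset.mem_cons_of_mem hr)))
          (by positivity) (norm_nonneg _)
    have := aux _ hre
    rwa [hcard] at this
  have h3 := ge_of_tendsto h1 (Eventually.of_forall h2)
  rw [hμ, norm_zero] at h3
  exact absurd h3 (not_le.2 (by positivity))

/-- The smallest singular value bounds `‖M v‖` from below. -/
lemma sigmaMin_mul_le {n : ℕ} (M : Matrix (Fin n) (Fin n) ℂ) (v : EuclideanSpace ℂ (Fin n)) :
    sigmaMin M * ‖v‖ ≤ ‖Matrix.toEuclideanLin M v‖ := by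
  by_cases hv : v = 0
  · simp [hv]
  have hv' : 0 < ‖v‖ := norm_pos_iff.2 hv
  have h1 : sigmaMin M ≤ ‖Matrix.toEuclideanLin M (((‖v‖⁻¹ : ℝ) : ℂ) • v)‖ := by
    apply csInf_le
    · exact ⟨0, by rintro r ⟨w, _, rfl⟩; exact norm_nonneg _⟩
    · refine ⟨_, ?_, rfl⟩
      rw [norm_smul, Complex.norm_real, norm_inv, norm_norm, inv_mul_cancel₀ hv'.ne']
  rw [map_smul, norm_smul, Complex.norm_real, norm_inv, norm_norm, inv_mul_eq_div,
    le_div_iff₀ hv'] at h1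
  exact h1

/-- No purely imaginary closed-loop eigenvalues. -/
lemma no_imag_eig {n : ℕ} (A P : Matrix (Fin n) (Fin n) ℝ) (N Ξ s : ℝ) (hN : 0 < N) (hΞ : 0 < Ξ)
    (hs : s ≤ Ξ ^ 2)
    (hP : Aᵀ * P + P * A + N • (P * P) = -(s • (1 : Matrix (Fin n) (Fin n) ℝ)))
    (ω : ℝ) (hdist : Ξ * Real.sqrt N <
        sigmaMin (A.map Complex.ofReal -
          ((ω : ℂ) * Complex.I) • (1 : Matrix (Fin n) (Fin n) ℂ))) :
    (ω : ℂ) * Complex.I ∉ spectrum ℂ ((A + N • P).map Complex.ofReal) := by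
  intro hmem
  obtain ⟨v, hv, h⟩ := (mem_spec_iff_eigvec _ _).1 hmem
  set Ac := A.map Complex.ofReal with hAc
  set Pc := P.map Complex.ofReal with hPc
  set M := Ac - ((ω : ℂ) * Complex.I) • (1 : Matrix (Fin n) (Fin n) ℂ) with hM
  have hone : (1 : Matrix (Fin n) (Fin n) ℝ).map Complex.ofReal = 1 := by simp
  have hF : (A + N • P).map Complex.ofReal = Ac + (N : ℂ) • Pc := by
    ext i j; simp [hAc, hPc]
  rw [hF, Matrix.add_mulVec, Matrix.smul_mulVec] at h
  have hric : Acᵀ * Pc + Pc * Ac + (N : ℂ) • (Pc * Pc) = -((s : ℂ) • 1) := by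
    have h0 := congrArg (fun X : Matrix (Fin n) (Fin n) ℝ => X.map Complex.ofReal) hP
    have e1 : (Aᵀ * P + P * A + N • (P * P)).map Complex.ofReal =
        Acᵀ * Pc + Pc * Ac + (N : ℂ) • (Pc * Pc) := by
      rw [hAc, hPc, ← Matrix.transpose_map, ← map_mul_ofReal, ← map_mul_ofReal, ← map_mul_ofReal]
      ext i j; simp
    have e2 : (-(s • (1 : Matrix (Fin n) (Fin n) ℝ))).map Complex.ofReal = -((s : ℂ) • 1) := by
      rw [← hone]; ext i j; simp only [Matrix.map_apply, Matrix.neg_apply, Matrix.smul_apply]; simp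
    rw [← e1, ← e2, h0]
  have hMv : M *ᵥ v = -((N : ℂ) • (Pc *ᵥ v)) := by
    rw [hM, Matrix.sub_mulVec, Matrix.smul_mulVec, Matrix.one_mulVec, ← h]
    abel
  have hMH : Mᴴ = Acᵀ + ((ω : ℂ) * Complex.I) • 1 := by
    rw [hM, Matrix.conjTranspose_sub, Matrix.conjTranspose_smul, Matrix.conjTranspose_one]
    have : Acᴴ = Acᵀ := by ext i j; simp [hAc]
    rw [this]; simp [sub_eq_add_neg]
  have hMw : Mᴴ *ᵥ (Pc *ᵥ v) = -((s : ℂ) • v) := by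
    have h0 := congrArg (fun X => X *ᵥ v) hric
    simp only [Matrix.add_mulVec, ← Matrix.mulVec_mulVec, Matrix.smul_mulVec, Matrix.neg_mulVec,
      Matrix.one_mulVec] at h0
    rw [hMH, Matrix.add_mulVec, Matrix.smul_mulVec, Matrix.one_mulVec, ← h0,
      ← Matrix.mulVec_smul, ← h, Matrix.mulVec_add, Matrix.mulVec_smul]
    abel
  have hMM : Mᴴ *ᵥ (M *ᵥ v) = ((N * s : ℝ) : ℂ) • v := by
    rw [hMv, Matrix.mulVec_neg, Matrix.mulVec_smul, hMw, smul_neg, neg_neg, smul_smul]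
    push_cast; rfl
  have hnorm : ∀ w : Fin n → ℂ, ((‖WithLp.toLp 2 w‖ ^ 2 : ℝ) : ℂ) = star w ⬝ᵥ w := by
    intro w
    rw [EuclideanSpace.norm_sq_eq]
    simp [dotProduct, Complex.conj_mul']
  have hsq : ‖WithLp.toLp 2 (M *ᵥ v)‖ ^ 2 = N * s * ‖WithLp.toLp 2 v‖ ^ 2 := by
    have : ((‖WithLp.toLp 2 (M *ᵥ v)‖ ^ 2 : ℝ) : ℂ) =
        ((N * s * ‖WithLp.toLp 2 v‖ ^ 2 : ℝ) : ℂ) := by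
      rw [Complex.ofReal_mul (N * s), hnorm, hnorm, Matrix.star_mulVec, ← Matrix.dotProduct_mulVec,
        hMM, dotProduct_smul, smul_eq_mul]
    exact_mod_cast this
  have h5 := sigmaMin_mul_le M (WithLp.toLp 2 v)
  have hvpos : 0 < ‖WithLp.toLp 2 v‖ := by
    rw [norm_pos_iff]; intro h; apply hv; simpa using h
  have h6 : Ξ * Real.sqrt N * ‖WithLp.toLp 2 v‖ < ‖WithLp.toLp 2 (M *ᵥ v)‖ :=
    lt_of_lt_of_le (mul_lt_mul_of_pos_right hdist hvpos) h5
  have h7 := pow_lt_pow_left₀ h6 (by positivity) two_ne_zero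
  rw [hsq, mul_pow, mul_pow, Real.sq_sqrt hN.le] at h7
  have h8 : N * s * ‖WithLp.toLp 2 v‖ ^ 2 ≤ N * Ξ ^ 2 * ‖WithLp.toLp 2 v‖ ^ 2 := by gcongr
  nlinarith

/-- A priori bound for symmetric solutions of the Riccati equation. -/
lemma riccati_bound {n : ℕ} (A P : Matrix (Fin n) (Fin n) ℝ) (N s : ℝ) (hN : 0 < N)
    (hs : 0 ≤ s) (hsym : P.IsSymm)
    (hP : Aᵀ * P + P * A + N • (P * P) = -(s • (1 : Matrix (Fin n) (Fin n) ℝ))) (i j : Fin n) :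
    (N * P i j + A i j) ^ 2 ≤ ∑ i, ∑ j, A i j ^ 2 := by
  have htr := congrArg Matrix.trace hP
  have e1 : (Aᵀ * P).trace = ∑ i, ∑ j, A i j * P i j := by
    simp only [Matrix.trace, Matrix.diag_apply, Matrix.mul_apply, Matrix.transpose_apply]
    exact Finset.sum_comm
  have e2 : (P * A).trace = ∑ i, ∑ j, A i j * P i j := by
    rw [← e1, ← Matrix.trace_transpose, Matrix.transpose_mul, hsym.eq]
  have e3 : (P * P).trace = ∑ i, ∑ j, P i j * P i j := by
    simp only [Matrix.trace, Matrix.diag_apply, Matrix.mul_apply]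
    refine Finset.sum_congr rfl fun i _ => Finset.sum_congr rfl fun j _ => ?_
    rw [hsym.apply i j]
  rw [Matrix.trace_add, Matrix.trace_add, Matrix.trace_smul, Matrix.trace_neg, Matrix.trace_smul,
    e1, e2, e3, Matrix.trace_one, smul_eq_mul, smul_eq_mul] at htr
  have hle : ∑ i, ∑ j, (N * P i j + A i j) ^ 2 ≤ ∑ i, ∑ j, A i j ^ 2 := by
    have e4 : ∑ i, ∑ j, (N * P i j + A i j) ^ 2 =
        N * ((∑ i, ∑ j, A i j * P i j) + (∑ i, ∑ j, A i j * P i j) + N * ∑ i, ∑ j, P i j * P i j)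
        + ∑ i, ∑ j, A i j ^ 2 := by
      simp only [mul_add, Finset.mul_sum, ← Finset.sum_add_distrib]
      refine Finset.sum_congr rfl fun i _ => Finset.sum_congr rfl fun j _ => ?_
      ring
    rw [e4, htr]
    have : 0 ≤ N * (s * (Fintype.card (Fin n) : ℝ)) := by positivity
    linarith
  refine le_trans ?_ hle
  refine le_trans ?_ (Finset.single_le_sum (f := fun i => ∑ j, (N * P i j + A i j) ^ 2)
    (fun i _ => Finset.sum_nonneg fun j _ => sq_nonneg _) (Finset.mem_univ i))
  exact Finset.single_le_sum (f := fun j => (N * P i j + A i j) ^ 2)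
    (fun j _ => sq_nonneg _) (Finset.mem_univ j)

/-- Parameters for which the Riccati equation has a stabilizing symmetric solution. -/
def goodSet {n : ℕ} (A : Matrix (Fin n) (Fin n) ℝ) (N : ℝ) : Set ℝ :=
  {s | ∃ P : Matrix (Fin n) (Fin n) ℝ, P.IsSymm ∧ IsHurwitz (A + N • P) ∧
    Aᵀ * P + P * A + N • (P * P) = -(s • (1 : Matrix (Fin n) (Fin n) ℝ))}

/-- Inverse function theorem for a quadratic map on a finite dimensional algebra. -/
lemma map_nhds_quadratic {R : Type*} [NormedRing R] [NormedAlgebra ℝ R] [FiniteDimensional ℝ R]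
    (a b p : R) (N : ℝ)
    (hinj : ∀ x : R, (a + N • p) * x + x * (b + N • p) = 0 → x = 0) :
    map (fun x : R => a * x + x * b + N • (x * x)) (𝓝 p) = 𝓝 (a * p + p * b + N • (p * p)) := by
  have : CompleteSpace R := FiniteDimensional.complete ℝ R
  let L : R →ₗ[ℝ] R := LinearMap.mulLeft ℝ (a + N • p) + LinearMap.mulRight ℝ (b + N • p)
  have hLinj : Function.Injective L := by
    rw [← LinearMap.ker_eq_bot, LinearMap.ker_eq_bot']
    exact hinj
  let e : R ≃L[ℝ] R := (LinearEquiv.ofInjectiveEndo L hLinj).toContinuousLinearEquiv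
  have hder : HasStrictFDerivAt (fun x : R => a * x + x * b + N • (x * x)) (e : R →L[ℝ] R) p := by
    have hid := hasStrictFDerivAt_id (𝕜 := ℝ) p
    have h1 := (((hasStrictFDerivAt_const a p).mul' hid).add
      (hid.mul' (hasStrictFDerivAt_const b p))).add ((hid.mul' hid).const_smul N)
    refine h1.congr_fderiv ?_
    ext1 x
    have he : e x = (a + N • p) * x + x * (b + N • p) := rfl
    rw [ContinuousLinearEquiv.coe_coe, he]
    simp [add_mul, mul_add]
    abel
  exact hder.map_nhds_eq_of_equiv

lemma goodSet_open {n : ℕ} (hn : 1 ≤ n) (A : Matrix (Fin n) (Fin n) ℝ) (N s : ℝ)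
    (hs : s ∈ goodSet A N) : goodSet A N ∈ 𝓝 s := by
  obtain ⟨P, hsym, hH, hP⟩ := hs
  set f : Matrix (Fin n) (Fin n) ℝ → Matrix (Fin n) (Fin n) ℝ :=
    fun X => Aᵀ * X + X * A + N • (X * X) with hf
  set F := A + N • P with hF
  have hmap : map f (𝓝 P) = 𝓝 (f P) := by
    refine map_nhds_quadratic Aᵀ A P N ?_
    intro X hX
    apply lyap_inj hn F hH X
    rw [hF, Matrix.transpose_add, Matrix.transpose_smul, hsym.eq]
    exact hX
  have ev1 : ∀ᶠ X in 𝓝 P, IsHurwitz (A + N • X) := by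
    have hc : Continuous (fun X : Matrix (Fin n) (Fin n) ℝ => A + N • X) := by fun_prop
    exact (hc.tendsto P).eventually (hurwitz_eventually _ hH)
  have ev2 : ∀ᶠ X in 𝓝 P, IsHurwitz (A + N • Xᵀ) := by
    have hc : Continuous (fun X : Matrix (Fin n) (Fin n) ℝ => A + N • Xᵀ) := by fun_prop
    refine (hc.tendsto P).eventually (hurwitz_eventually _ ?_)
    rw [hsym.eq]; exact hH
  have hU : f '' {X | IsHurwitz (A + N • X) ∧ IsHurwitz (A + N • Xᵀ)} ∈ 𝓝 (f P) := by
    rw [← hmap]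
    exact image_mem_map (ev1.and ev2)
  have hc : Continuous (fun t : ℝ => -(t • (1 : Matrix (Fin n) (Fin n) ℝ))) := by fun_prop
  have hfP : f P = -(s • (1 : Matrix (Fin n) (Fin n) ℝ)) := hP
  rw [hfP] at hU
  filter_upwards [(hc.tendsto s).eventually hU] with t ht
  obtain ⟨X, ⟨hX1, hX2⟩, hX⟩ := ht
  refine ⟨X, ?_, hX1, hX⟩
  have hX' : Aᵀ * X + X * A + N • (X * X) = -(t • (1 : Matrix (Fin n) (Fin n) ℝ)) := hX
  have hXt : Aᵀ * Xᵀ + Xᵀ * A + N • (Xᵀ * Xᵀ) = -(t • (1 : Matrix (Fin n) (Fin n) ℝ)) := by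
    have := congrArg Matrix.transpose hX'
    simp only [Matrix.transpose_add, Matrix.transpose_mul, Matrix.transpose_transpose,
      Matrix.transpose_smul, Matrix.transpose_neg, Matrix.transpose_one] at this
    rw [← this]; abel
  have hD : X - Xᵀ = 0 := by
    apply lyap_inj hn _ hX2
    have : (A + N • Xᵀ)ᵀ * (X - Xᵀ) + (X - Xᵀ) * (A + N • Xᵀ) =
        (Aᵀ * X + X * A + N • (X * X)) - (Aᵀ * Xᵀ + Xᵀ * A + N • (Xᵀ * Xᵀ)) := by
      rw [Matrix.transpose_add, Matrix.transpose_smul, Matrix.transpose_transpose]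
      simp only [add_mul, mul_sub, sub_mul, mul_add, smul_mul_assoc, mul_smul_comm, smul_sub]
      abel
    rw [this, hX', hXt, sub_self]
  exact (sub_eq_zero.1 hD).symm

lemma goodSet_closed {n : ℕ} (A : Matrix (Fin n) (Fin n) ℝ) (N Ξ : ℝ) (hN : 0 < N) (hΞ : 0 < Ξ)
    (hdist : ∀ ω : ℝ,
      Ξ * Real.sqrt N <
        sigmaMin (A.map Complex.ofReal -
          ((ω : ℂ) * Complex.I) • (1 : Matrix (Fin n) (Fin n) ℂ))) :
    IsClosed (goodSet A N ∩ Set.Icc 0 (Ξ ^ 2)) := by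
  rw [← isSeqClosed_iff_isClosed]
  intro u s hu hlim
  have hsI : s ∈ Set.Icc 0 (Ξ ^ 2) :=
    isClosed_Icc.mem_of_tendsto hlim (Eventually.of_forall fun k => (hu k).2)
  refine ⟨?_, hsI⟩
  choose P hsym hH hP using fun k => (hu k).1
  set R := ∑ i, ∑ j, A i j ^ 2 with hR
  let K : Set (Matrix (Fin n) (Fin n) ℝ) :=
    Set.pi Set.univ fun i => Set.pi Set.univ fun j =>
      Set.Icc ((-Real.sqrt R - A i j) / N) ((Real.sqrt R - A i j) / N)
  have hK : IsCompact K :=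
    isCompact_univ_pi fun i => isCompact_univ_pi fun j => isCompact_Icc
  have hPK : ∀ k, P k ∈ K := by
    intro k i _ j _
    have h := Real.abs_le_sqrt (riccati_bound A (P k) N (u k) hN (hu k).2.1 (hsym k) (hP k) i j)
    rw [abs_le] at h
    constructor
    · rw [div_le_iff₀ hN]; linarith
    · rw [le_div_iff₀ hN]; linarith
  have : FirstCountableTopology (Matrix (Fin n) (Fin n) ℝ) :=
    inferInstanceAs (FirstCountableTopology (Fin n → Fin n → ℝ))
  obtain ⟨Q, _, φ, hφ, hQ⟩ := hK.tendsto_subseq hPK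
  have hφs := hlim.comp hφ.tendsto_atTop
  have hQsym : Q.IsSymm := by
    have hc : Continuous (fun X : Matrix (Fin n) (Fin n) ℝ => Xᵀ) := by fun_prop
    exact tendsto_nhds_unique ((hc.tendsto Q).comp hQ)
      (hQ.congr fun k => (hsym (φ k)).eq.symm)
  have hQeq : Aᵀ * Q + Q * A + N • (Q * Q) = -(s • (1 : Matrix (Fin n) (Fin n) ℝ)) := by
    have hc : Continuous (fun X : Matrix (Fin n) (Fin n) ℝ =>
      Aᵀ * X + X * A + N • (X * X)) := by fun_prop
    have hc2 : Continuous (fun t : ℝ => -(t • (1 : Matrix (Fin n) (Fin n) ℝ))) := by fun_prop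
    exact tendsto_nhds_unique ((hc.tendsto Q).comp hQ)
      (((hc2.tendsto s).comp hφs).congr fun k => (hP (φ k)).symm)
  refine ⟨Q, hQsym, ?_, hQeq⟩
  intro μ hμ
  have hc : Continuous (fun X : Matrix (Fin n) (Fin n) ℝ => A + N • X) := by fun_prop
  have hle := hurwitz_limit _ (fun k => hH (φ k)) _ ((hc.tendsto Q).comp hQ) μ hμ
  refine lt_of_le_of_ne hle ?_
  intro h0
  have hμ' : μ = (μ.im : ℂ) * Complex.I := by
    apply Complex.ext <;> simp [h0]
  rw [hμ'] at hμ
  exact no_imag_eig A Q N Ξ s hN hΞ hsI.2 hQeq μ.im (hdist μ.im) hμ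

end Helpers

/-- The matrix-algebraic core of Proposition 2 (Lemmas 1 and 2 combined): if `A` is
Hurwitz and `σ_min(A - iωI) > Ξ√N` for all `ω ∈ ℝ`, then the algebraic Riccati equation
`AᵀP + PA + N P² + (Ξ² + ε) I = 0` has a symmetric positive definite solution for some `ε > 0`. -/
theorem stmt_3 (n : ℕ) (hn : 1 ≤ n) (A : Matrix (Fin n) (Fin n) ℝ)
    (hA : IsHurwitz A) (N Ξ : ℝ) (hN : 0 < N) (hΞ : 0 < Ξ)
    (hdist : ∀ ω : ℝ,
      Ξ * Real.sqrt N <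
        sigmaMin (A.map Complex.ofReal -
          ((ω : ℂ) * Complex.I) • (1 : Matrix (Fin n) (Fin n) ℂ))) :
    ∃ ε : ℝ, 0 < ε ∧ ∃ P : Matrix (Fin n) (Fin n) ℝ, P.IsSymm ∧
      (∀ x : Fin n → ℝ, x ≠ 0 → 0 < x ⬝ᵥ P.mulVec x) ∧
      Aᵀ * P + P * A + N • (P * P) + (Ξ ^ 2 + ε) • (1 : Matrix (Fin n) (Fin n) ℝ) = 0 := by
  have hsub : Set.Icc 0 (Ξ ^ 2) ⊆ goodSet A N := by
    refine IsClosed.Icc_subset_of_forall_mem_nhdsWithin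
      (goodSet_closed A N Ξ hN hΞ hdist) ?_ ?_
    · exact ⟨0, Matrix.isSymm_zero, by simpa using hA, by simp⟩
    · intro x hx
      exact mem_nhdsWithin_of_mem_nhds (goodSet_open hn A N x hx.1)
  have h1 : Ξ ^ 2 ∈ goodSet A N := hsub ⟨by positivity, le_rfl⟩
  obtain ⟨δ, hδ, hball⟩ := Metric.mem_nhds_iff.1 (goodSet_open hn A N _ h1)
  have h2 : Ξ ^ 2 + δ / 2 ∈ goodSet A N := by
    apply hball
    rw [Metric.mem_ball, Real.dist_eq, add_sub_cancel_left, abs_of_pos (by positivity)]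
    linarith
  obtain ⟨P, hsym, _, hP⟩ := h2
  refine ⟨δ / 2, by positivity, P, hsym, ?_, ?_⟩
  · intro x hx
    refine lyap_pos hn A hA P ?_ x hx
    intro y hy
    have h3 : Aᵀ * P + P * A =
        -((Ξ ^ 2 + δ / 2) • (1 : Matrix (Fin n) (Fin n) ℝ)) - N • (Pᵀ * P) := by
      rw [← hP, hsym.eq]; abel
    rw [h3, Matrix.sub_mulVec, Matrix.neg_mulVec, Matrix.smul_mulVec, Matrix.smul_mulVec,
      Matrix.one_mulVec, dotProduct_sub, dotProduct_neg, dotProduct_smul, dotProduct_smul,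
      ← Matrix.mulVec_mulVec, Matrix.dotProduct_mulVec y Pᵀ, Matrix.vecMul_transpose,
      smul_eq_mul, smul_eq_mul]
    have h4 : 0 < y ⬝ᵥ y := by
      have := Matrix.dotProduct_star_self_pos_iff.2 hy
      simpa using this
    have h5 : 0 ≤ (P *ᵥ y) ⬝ᵥ (P *ᵥ y) := by
      exact Finset.sum_nonneg fun i _ => mul_self_nonneg _
    have h6 : 0 < (Ξ ^ 2 + δ / 2) * (y ⬝ᵥ y) := by positivity
    have h7 := mul_nonneg hN.le h5
    linarith
  · rw [hP, neg_add_cancel]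
end

section
/- Let n ≥ 1 and let A, R, Q ∈ M_n(ℝ) with A Hurwitz and R and Q symmetric positive definite. Suppose the 2n×2n Hamiltonian matrix H = fromBlocks A R (−Q) (−Aᵀ) is hyperbolic, i.e. regarded as a complex matrix it has no purely imaginary eigenvalue iω with ω ∈ ℝ. Then there exists a symmetric positive definite matrix P ∈ M_n(ℝ) satisfying the algebraic Riccati equation AᵀP + PA + PRP + Q = 0. -/
open Matrix

open Polynomial in
lemma irr_roots_re (f : ℝ[X]) (hf : Irreducible f) (z w : ℂ) (hz : aeval z f = 0)
    (hw : aeval w f = 0) : w.re = z.re := by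
  have hd : aeval z (X ^ 2 - C (2 * z.re) * X + C (z.re ^ 2 + z.im ^ 2) : ℝ[X]) = 0 := by
    apply Complex.ext <;> simp [pow_two] <;> ring
  have h1 := minpoly.dvd ℝ z hd
  rw [← minpoly.eq_of_irreducible hf hz] at h1
  obtain ⟨g, hg⟩ := h1
  have h2 : aeval w (X ^ 2 - C (2 * z.re) * X + C (z.re ^ 2 + z.im ^ 2) : ℝ[X]) = 0 := by
    rw [hg]; simp [hw]
  have h3 : (w - z) * (w - (starRingEnd ℂ) z) = 0 := by
    rw [← h2]
    apply Complex.ext <;> simp [pow_two] <;> ring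
  rcases mul_eq_zero.1 h3 with h | h
  · rw [sub_eq_zero.1 h]
  · rw [sub_eq_zero.1 h]; simp

open Polynomial in
lemma factor_re (f : ℝ[X]) : f ≠ 0 → (∀ z : ℂ, aeval z f = 0 → z.re ≠ 0) →
    ∃ p q : ℝ[X], f = p * q ∧ (∀ z : ℂ, aeval z p = 0 → z.re < 0) ∧
      (∀ z : ℂ, aeval z q = 0 → 0 < z.re) := by
  induction f using WfDvdMonoid.induction_on_irreducible with
  | zero => intro h; exact absurd rfl h
  | unit u hu =>
    intro _ _
    refine ⟨u, 1, by simp, fun z hz => ?_, by simp⟩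
    exact absurd hz (hu.map (aeval z)).ne_zero
  | mul a i ha hi ih =>
    intro h0 hr
    obtain ⟨p, q, rfl, hp, hq⟩ := ih ha (fun z hz => hr z (by simp [hz]))
    obtain ⟨z, hz⟩ := IsAlgClosed.exists_aeval_eq_zero ℂ i
      (by exact (degree_pos_of_irreducible hi).ne')
    rcases lt_or_gt_of_ne (hr z (by simp [hz])) with h | h
    · refine ⟨i * p, q, by ring, fun w hw => ?_, hq⟩
      rw [map_mul, mul_eq_zero] at hw
      rcases hw with hw | hw
      · rw [irr_roots_re i hi z w hz hw]; exact h
      · exact hp w hw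
    · refine ⟨p, i * q, by ring, hp, fun w hw => ?_⟩
      rw [map_mul, mul_eq_zero] at hw
      rcases hw with hw | hw
      · rw [irr_roots_re i hi z w hz hw]; exact h
      · exact hq w hw

open Polynomial in
lemma isotropic_ker {E : Type*} [AddCommGroup E] [Module ℝ E] (T : Module.End ℝ E)
    (B : E →ₗ[ℝ] E →ₗ[ℝ] ℝ) (hB : ∀ x y, B (T x) y = - B x (T y)) (p : ℝ[X])
    (hp : IsCoprime p (p.comp (-X))) (x y : E) (hx : aeval T p x = 0) (hy : aeval T p y = 0) :
    B x y = 0 := by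
  have key : ∀ (r : ℝ[X]) (x y : E), B (aeval T r x) y = B x (aeval T (r.comp (-X)) y) := by
    intro r
    induction r using Polynomial.induction_on' with
    | add r s hr hs => intro x y; simp [hr, hs]
    | monomial k c =>
      intro x y
      have h : ∀ (k : ℕ) (x y : E), B ((T ^ k) x) y = B x (((-T) ^ k) y) := by
        intro k
        induction k with
        | zero => simp
        | succ k ih =>
          intro x y
          rw [pow_succ', pow_succ]
          simp only [Module.End.mul_apply]
          rw [hB, ← map_neg, ih, LinearMap.neg_apply]
      simp [← C_mul_X_pow_eq_monomial, h, Algebra.algebraMap_eq_smul_one]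
  obtain ⟨a, b, hab⟩ := hp
  have h1 : aeval T (a * p + b * p.comp (-X)) y = y := by rw [hab]; simp
  have h2 : y = aeval T (p.comp (-X)) (aeval T b y) := by
    rw [← Module.End.mul_apply, ← map_mul, mul_comm (p.comp (-X))]
    nth_rewrite 1 [← h1]
    simp [hy]
  rw [h2, ← key, hx]; simp

attribute [local instance] Matrix.linftyOpNormedRing Matrix.linftyOpNormedAlgebra in
lemma pow_tendsto {n : ℕ} [NeZero n] (C : Matrix (Fin n) (Fin n) ℂ) (h : ∀ μ ∈ spectrum ℂ C, ‖μ‖ < 1) :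
    Filter.Tendsto (fun k => C ^ k) Filter.atTop (nhds 0) := by
  have h1 : spectralRadius ℂ C < (1 : NNReal) := by
    apply spectrum.spectralRadius_lt_of_forall_lt
    intro k hk
    exact_mod_cast h k hk
  obtain ⟨r, hr, hr1⟩ := ENNReal.lt_iff_exists_nnreal_btwn.1 h1
  have h2 := spectrum.pow_nnnorm_pow_one_div_tendsto_nhds_spectralRadius C
  have h3 := h2.eventually (gt_mem_nhds hr)
  have hr1' : (r : ℝ) < 1 := by exact_mod_cast hr1
  refine squeeze_zero_norm' (a := fun k => (r : ℝ) ^ k) ?_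
    (tendsto_pow_atTop_nhds_zero_of_lt_one r.2 hr1')
  filter_upwards [h3, Filter.eventually_gt_atTop 0] with k hk hk0
  have h4 : ((‖C ^ k‖₊ : ENNReal) ^ (1 / (k : ℝ))) ^ (k : ℝ) ≤ (r : ENNReal) ^ (k : ℝ) :=
    ENNReal.rpow_le_rpow hk.le (by positivity)
  rw [← ENNReal.rpow_mul, one_div, inv_mul_cancel₀ (by positivity), ENNReal.rpow_one,
    ENNReal.rpow_natCast] at h4
  exact_mod_cast h4

lemma not_spec {n : ℕ} (A : Matrix (Fin n) (Fin n) ℂ) (hA : ∀ μ ∈ spectrum ℂ A, μ.re < 0)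
    (a b : ℂ) (hab : (a, b) ≠ (0, 0)) (h : 0 ≤ (a * (starRingEnd ℂ) b).re) :
    IsUnit (a • (1 : Matrix (Fin n) (Fin n) ℂ) - b • A) := by
  by_cases hb : b = 0
  · subst hb
    have ha : a ≠ 0 := by rintro rfl; exact hab rfl
    have := (isUnit_one (M := Matrix (Fin n) (Fin n) ℂ)).smul (Units.mk0 a ha)
    rw [Units.smul_mk0] at this
    simpa using this
  · by_contra hc
    have : a / b ∈ spectrum ℂ A := by
      rw [spectrum.mem_iff]
      intro hu
      apply hc
      have := hu.smul (Units.mk0 b hb)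
      convert this using 1
      rw [Units.smul_mk0, smul_sub, Algebra.algebraMap_eq_smul_one, smul_smul, mul_div_cancel₀ _ hb]
    have := hA _ this
    rw [Complex.div_re, ← add_div] at this
    have h5 : 0 < Complex.normSq b := Complex.normSq_pos.2 hb
    rw [div_lt_iff₀ h5] at this
    simp at h
    linarith

lemma lyap {n : ℕ} [NeZero n] (A P : Matrix (Fin n) (Fin n) ℝ) (hA : IsHurwitz A) (hP : P.IsSymm)
    (h : ∀ x : Fin n → ℝ, x ≠ 0 → x ⬝ᵥ (P * A) *ᵥ x < 0) (x : Fin n → ℝ) (hx : x ≠ 0) :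
    0 < x ⬝ᵥ P *ᵥ x := by
  set φ : Matrix (Fin n) (Fin n) ℝ →+* Matrix (Fin n) (Fin n) ℂ := Complex.ofRealHom.mapMatrix with hφ
  have hφA : φ A = A.map Complex.ofReal := rfl
  have hU : IsUnit (1 - A) := by
    have := not_spec _ hA 1 1 (by simp) (by simp)
    rw [← hφA, one_smul, one_smul, ← map_one φ, ← map_sub, isUnit_iff_isUnit_det, hφ,
      ← RingHom.map_det, isUnit_iff_ne_zero] at this
    rw [isUnit_iff_isUnit_det, isUnit_iff_ne_zero]
    intro h; apply this; rw [h]; simp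
  obtain ⟨D, hD1, hD2⟩ : ∃ D, (1 - A) * D = 1 ∧ D * (1 - A) = 1 := by
    obtain ⟨u, hu⟩ := hU
    exact ⟨(u⁻¹ : _), by rw [← hu]; simp, by rw [← hu]; simp⟩
  set C := (1 + A) * D with hC
  have hspec : ∀ μ ∈ spectrum ℂ (φ C), ‖μ‖ < 1 := by
    intro μ hμ
    by_contra hc
    push Not at hc
    rw [spectrum.mem_iff] at hμ
    apply hμ
    have hDu : IsUnit (φ D) := by
      apply IsUnit.map
      exact ⟨⟨D, 1 - A, hD2, hD1⟩, rfl⟩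
    have e : algebraMap ℂ _ μ - φ C = ((μ - 1) • (1 : Matrix (Fin n) (Fin n) ℂ) - (μ + 1) • φ A) * φ D := by
      have : (1 : Matrix (Fin n) (Fin n) ℂ) = (1 - φ A) * φ D := by
        have := congrArg φ hD1
        rw [map_mul, map_sub, map_one] at this
        exact this.symm
      rw [Algebra.algebraMap_eq_smul_one]
      nth_rewrite 1 [this]
      rw [hC, map_mul, map_add, map_one, ← smul_mul_assoc, ← sub_mul]
      congr 1
      module
    rw [e]
    refine IsUnit.mul (not_spec _ hA _ _ ?_ ?_) hDu
    · intro h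
      rw [Prod.mk.injEq] at h
      have h1 : (2 : ℂ) = 0 := by linear_combination h.2 - h.1
      norm_num at h1
    · have : 1 ≤ ‖μ‖ ^ 2 := by nlinarith
      rw [← Complex.normSq_eq_norm_sq, Complex.normSq_apply] at this
      simp
      nlinarith
  have ht := pow_tendsto _ hspec
  have ht' : Filter.Tendsto (fun k => C ^ k) Filter.atTop (nhds 0) := by
    have hcont : Continuous (fun M : Matrix (Fin n) (Fin n) ℂ => M.map Complex.re) :=
      continuous_id.matrix_map Complex.continuous_re
    have := (hcont.tendsto 0).comp ht
    convert this using 2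
    · ext i j
      rw [Function.comp_apply, ← map_pow]
      simp [hφ]
    · ext i j; simp
  let f : (Fin n → ℝ) → ℝ := fun z => z ⬝ᵥ P *ᵥ z
  have hf : Continuous f := by
    simp only [f]
    exact continuous_id.dotProduct (continuous_const.matrix_mulVec continuous_id)
  have hlim : Filter.Tendsto (fun k => f ((C ^ k) *ᵥ x)) Filter.atTop (nhds 0) := by
    have hc : Continuous (fun M : Matrix (Fin n) (Fin n) ℝ => f (M *ᵥ x)) :=
      hf.comp (continuous_id.matrix_mulVec continuous_const)
    have := (hc.tendsto 0).comp ht'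
    simpa [f, Function.comp_def] using this
  have hdec : ∀ z, z ≠ 0 → f (C *ᵥ z) < f z := by
    intro z hz
    obtain ⟨w, rfl⟩ : ∃ w, z = (1 - A) *ᵥ w := ⟨D *ᵥ z, by rw [mulVec_mulVec, hD1, one_mulVec]⟩
    have hw : w ≠ 0 := by rintro rfl; simp at hz
    have e : C *ᵥ ((1 - A) *ᵥ w) = (1 + A) *ᵥ w := by
      rw [mulVec_mulVec, hC, mul_assoc, hD2, mul_one]
    rw [e]
    have := h w hw
    have hs : (A *ᵥ w) ⬝ᵥ P *ᵥ w = w ⬝ᵥ (P * A) *ᵥ w := by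
      rw [← mulVec_mulVec, dotProduct_mulVec w, ← mulVec_transpose, hP.eq, dotProduct_comm]
    have hs2 : w ⬝ᵥ P *ᵥ (A *ᵥ w) = w ⬝ᵥ (P * A) *ᵥ w := by rw [mulVec_mulVec]
    simp only [f, add_mulVec, sub_mulVec, one_mulVec, mulVec_add, mulVec_sub, dotProduct_add,
      add_dotProduct, dotProduct_sub, sub_dotProduct, hs, hs2]
    linarith
  have hle : ∀ z, f (C *ᵥ z) ≤ f z := by
    intro z
    by_cases hz : z = 0
    · subst hz; simp
    · exact (hdec z hz).le
  have hanti : Antitone (fun k => f ((C ^ k) *ᵥ x)) := by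
    apply antitone_nat_of_succ_le
    intro k
    rw [pow_succ', ← mulVec_mulVec]
    exact hle _
  have h0 := hanti.le_of_tendsto hlim 1
  have h1 := hdec x hx
  simp at h0
  exact h0.trans_lt h1

/-- The standard symplectic form. -/
noncomputable def sympl (n : ℕ) : (Fin n ⊕ Fin n → ℝ) →ₗ[ℝ] (Fin n ⊕ Fin n → ℝ) →ₗ[ℝ] ℝ :=
  LinearMap.mk₂ ℝ (fun x y => (x ∘ Sum.inl) ⬝ᵥ (y ∘ Sum.inr) - (x ∘ Sum.inr) ⬝ᵥ (y ∘ Sum.inl))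
    (by intro x y z; simp only [Pi.add_comp, add_dotProduct]; ring)
    (by intro c x y; simp only [Pi.smul_comp, smul_dotProduct, smul_sub])
    (by intro x y z; simp only [Pi.add_comp, dotProduct_add]; ring)
    (by intro c x y; simp only [Pi.smul_comp, dotProduct_smul, smul_sub])

lemma sympl_apply {n : ℕ} (a b c d : Fin n → ℝ) :
    sympl n (Sum.elim a b) (Sum.elim c d) = a ⬝ᵥ d - b ⬝ᵥ c := by
  simp [sympl]

lemma symm_dot {n : ℕ} {R : Matrix (Fin n) (Fin n) ℝ} (hR : R.IsSymm) (x y : Fin n → ℝ) :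
    (R *ᵥ x) ⬝ᵥ y = x ⬝ᵥ R *ᵥ y := by
  rw [dotProduct_mulVec, ← mulVec_transpose, hR.eq]

lemma tr_dot {n : ℕ} (A : Matrix (Fin n) (Fin n) ℝ) (x y : Fin n → ℝ) :
    (Aᵀ *ᵥ x) ⬝ᵥ y = x ⬝ᵥ A *ᵥ y := by
  rw [dotProduct_mulVec, ← mulVec_transpose]

lemma sympl_ham {n : ℕ} (A R Q : Matrix (Fin n) (Fin n) ℝ) (hR : R.IsSymm) (hQ : Q.IsSymm)
    (x y : Fin n ⊕ Fin n → ℝ) :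
    sympl n (toLin' (fromBlocks A R (-Q) (-Aᵀ)) x) y
      = - sympl n x (toLin' (fromBlocks A R (-Q) (-Aᵀ)) y) := by
  obtain ⟨a, b, rfl⟩ : ∃ a b, x = Sum.elim a b := ⟨_, _, (Sum.elim_comp_inl_inr x).symm⟩
  obtain ⟨c, d, rfl⟩ : ∃ a b, y = Sum.elim a b := ⟨_, _, (Sum.elim_comp_inl_inr y).symm⟩
  simp only [toLin'_apply, fromBlocks_mulVec, sympl_apply, Sum.elim_comp_inl, Sum.elim_comp_inr]
  simp only [add_dotProduct, dotProduct_add, neg_mulVec, neg_dotProduct, dotProduct_neg,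
    symm_dot hR, symm_dot hQ, tr_dot]
  rw [dotProduct_comm a (Aᵀ *ᵥ d), tr_dot, dotProduct_comm d]
  ring

lemma fst_inj {n : ℕ} (A R Q : Matrix (Fin n) (Fin n) ℝ)
    (hRpos : ∀ x : Fin n → ℝ, x ≠ 0 → 0 < x ⬝ᵥ R.mulVec x)
    (V : Submodule ℝ (Fin n ⊕ Fin n → ℝ)) (hV : ∀ x ∈ V, ∀ y ∈ V, sympl n x y = 0)
    (hinv : ∀ x ∈ V, toLin' (fromBlocks A R (-Q) (-Aᵀ)) x ∈ V) :
    Function.Injective ((LinearMap.funLeft ℝ ℝ (Sum.inl : Fin n → Fin n ⊕ Fin n)).domRestrict V) := by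
  rw [← LinearMap.ker_eq_bot, LinearMap.ker_eq_bot']
  rintro ⟨x, hx⟩ h
  obtain ⟨a, b, rfl⟩ : ∃ a b, x = Sum.elim a b := ⟨_, _, (Sum.elim_comp_inl_inr x).symm⟩
  have ha : a = 0 := by
    ext i; simpa [LinearMap.funLeft] using congrFun h i
  subst ha
  have h1 := hV _ hx _ (hinv _ hx)
  simp only [toLin'_apply, fromBlocks_mulVec, sympl_apply, Sum.elim_comp_inl, Sum.elim_comp_inr] at h1
  have hb : b = 0 := by
    by_contra hb
    have := hRpos b hb
    simp at h1
    linarith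
  subst hb
  ext i
  rcases i with i | i <;> simp

open Polynomial in
lemma coprime_neg (p : ℝ[X]) (h : (∀ z : ℂ, aeval z p = 0 → z.re < 0) ∨
    (∀ z : ℂ, aeval z p = 0 → 0 < z.re)) : IsCoprime p (p.comp (-X)) := by
  rw [isCoprime_iff_aeval_ne_zero_of_isAlgClosed ℝ ℂ]
  intro z
  by_contra hc
  push Not at hc
  obtain ⟨h1, h2⟩ := hc
  rw [aeval_comp, map_neg, aeval_X] at h2
  rcases h with h | h
  · have := h _ h1; have := h _ h2; simp at this; linarith
  · have := h _ h1; have := h _ h2; simp at this; linarith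

open Polynomial in
lemma exists_P {n : ℕ} (A R Q : Matrix (Fin n) (Fin n) ℝ)
    (hRsymm : R.IsSymm)
    (hRpos : ∀ x : Fin n → ℝ, x ≠ 0 → 0 < x ⬝ᵥ R.mulVec x)
    (hQsymm : Q.IsSymm)
    (hHyp : ∀ ω : ℝ, Complex.I * (ω : ℂ) ∉
      spectrum ℂ ((Matrix.fromBlocks A R (-Q) (-Aᵀ)).map Complex.ofReal)) :
    ∃ P : Matrix (Fin n) (Fin n) ℝ, P.IsSymm ∧ Aᵀ * P + P * A + P * R * P + Q = 0 := by
  set H := Matrix.fromBlocks A R (-Q) (-Aᵀ) with hH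
  have hroots : ∀ z : ℂ, aeval z H.charpoly = 0 → z.re ≠ 0 := by
    intro z hz h0
    apply hHyp z.im
    rw [mem_spectrum_iff_isRoot_charpoly]
    have e : Complex.I * (z.im : ℂ) = z := by
      apply Complex.ext <;> simp [h0]
    have e2 : (H.map Complex.ofReal).charpoly = H.charpoly.map (algebraMap ℝ ℂ) :=
      charpoly_map H (algebraMap ℝ ℂ)
    rw [e, e2, IsRoot, eval_map_algebraMap, hz]
  obtain ⟨p, q, hpq, hp, hq⟩ := factor_re H.charpoly H.charpoly_monic.ne_zero hroots
  have hcop : IsCoprime p q := by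
    rw [isCoprime_iff_aeval_ne_zero_of_isAlgClosed ℝ ℂ]
    intro z
    by_contra hc
    push Not at hc
    have := hp z hc.1
    have := hq z hc.2
    linarith
  set T : Module.End ℝ (Fin n ⊕ Fin n → ℝ) := toLin' H with hT
  have hB := sympl_ham A R Q hRsymm hQsymm
  have hiso : ∀ r : ℝ[X], IsCoprime r (r.comp (-X)) →
      ∀ x ∈ LinearMap.ker (aeval T r), ∀ y ∈ LinearMap.ker (aeval T r), sympl n x y = 0 :=
    fun r hr x hx y hy => isotropic_ker T (sympl n) hB r hr x y hx hy
  have hinv : ∀ r : ℝ[X], ∀ x ∈ LinearMap.ker (aeval T r), T x ∈ LinearMap.ker (aeval T r) := by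
    intro r x hx
    rw [LinearMap.mem_ker] at hx ⊢
    have : aeval T (r * X) x = aeval T (X * r) x := by rw [mul_comm]
    simpa [hx] using this
  have hVi := hiso p (coprime_neg p (Or.inl hp))
  have hUi := hiso q (coprime_neg q (Or.inr hq))
  have injV := fst_inj A R Q hRpos _ hVi (hinv p)
  have injU := fst_inj A R Q hRpos _ hUi (hinv q)
  have hsup := sup_ker_aeval_eq_ker_aeval_mul_of_coprime T hcop
  have htop : LinearMap.ker (aeval T (p * q)) = ⊤ := by
    rw [← hpq, LinearMap.ker_eq_top]
    have := LinearMap.aeval_self_charpoly T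
    rwa [hT, charpoly_toLin'] at this
  rw [htop] at hsup
  have d1 := LinearMap.finrank_le_finrank_of_injective injV
  have d2 := LinearMap.finrank_le_finrank_of_injective injU
  have d3 := Submodule.finrank_add_le_finrank_add_finrank (LinearMap.ker (aeval T p))
    (LinearMap.ker (aeval T q))
  rw [hsup, finrank_top] at d3
  simp only [Module.finrank_fintype_fun_eq_card, Fintype.card_sum, Fintype.card_fin] at d1 d2 d3
  have dV : Module.finrank ℝ (LinearMap.ker (aeval T p)) = Module.finrank ℝ (Fin n → ℝ) := by
    rw [Module.finrank_fintype_fun_eq_card, Fintype.card_fin]; omega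
  set V := LinearMap.ker (aeval T p) with hV
  let e := LinearEquiv.ofInjectiveOfFinrankEq _ injV dV
  let g : (Fin n → ℝ) →ₗ[ℝ] (Fin n → ℝ) :=
    (LinearMap.funLeft ℝ ℝ (Sum.inr : Fin n → Fin n ⊕ Fin n)) ∘ₗ V.subtype ∘ₗ e.symm.toLinearMap
  have hesymm : ∀ u, (e.symm u : Fin n ⊕ Fin n → ℝ) = Sum.elim u (g u) := by
    intro u
    have h1 : (e.symm u : Fin n ⊕ Fin n → ℝ) ∘ Sum.inl = u := e.apply_symm_apply u
    have h2 : (e.symm u : Fin n ⊕ Fin n → ℝ) ∘ Sum.inr = g u := rfl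
    rw [← Sum.elim_comp_inl_inr (e.symm u : Fin n ⊕ Fin n → ℝ), h1, h2]
  have hmem : ∀ u, Sum.elim u (g u) ∈ V := fun u => hesymm u ▸ (e.symm u).2
  have hgraph : ∀ u w, Sum.elim u w ∈ V → w = g u := by
    intro u w hw
    have h1 : e ⟨_, hw⟩ = u := by
      change (Sum.elim u w) ∘ Sum.inl = u
      simp
    have h2 := hesymm u
    rw [← h1, e.symm_apply_apply, h1] at h2
    have h3 := congrArg (fun f => f ∘ Sum.inr) h2
    simpa using h3
  set P := LinearMap.toMatrix' g with hP
  have hPg : ∀ u, g u = P *ᵥ u := fun u => by rw [hP, LinearMap.toMatrix'_mulVec]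
  refine ⟨P, ?_, ?_⟩
  · have hs : ∀ u v : Fin n → ℝ, u ⬝ᵥ P *ᵥ v = (P *ᵥ u) ⬝ᵥ v := by
      intro u v
      have := hVi _ (hmem u) _ (hmem v)
      rw [sympl_apply, hPg, hPg] at this
      linarith
    ext i j
    have := hs (Pi.single i 1) (Pi.single j 1)
    simpa using this.symm
  · have hall : ∀ u, (Aᵀ * P + P * A + P * R * P + Q) *ᵥ u = 0 := by
      intro u
      have h1 := hinv p _ (hmem u)
      rw [hT, toLin'_apply, hH, fromBlocks_mulVec] at h1
      have h2 := hgraph _ _ h1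
      simp only [Sum.elim_comp_inl, Sum.elim_comp_inr, hPg, neg_mulVec, mulVec_add,
        mulVec_mulVec, neg_mul] at h2
      simp only [add_mulVec]
      rw [← mul_assoc] at h2
      have : (P * A) *ᵥ u + (P * R * P) *ᵥ u + Q *ᵥ u + (Aᵀ * P) *ᵥ u = 0 := by
        rw [← h2]; abel
      rw [← this]; abel
    apply Matrix.toLin'.injective
    apply LinearMap.ext
    intro u
    rw [toLin'_apply, hall, map_zero, LinearMap.zero_apply]

/-- Lemma 1: if `A` is Hurwitz, `R`, `Q` are symmetric positive definite, and the
Hamiltonian matrix `fromBlocks A R (-Q) (-Aᵀ)` has no purely imaginary eigenvalue,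
then the algebraic Riccati equation `AᵀP + PA + PRP + Q = 0` has a symmetric positive
definite solution. -/
theorem stmt_5 (n : ℕ) (hn : 1 ≤ n) (A R Q : Matrix (Fin n) (Fin n) ℝ)
    (hA : IsHurwitz A)
    (hRsymm : R.IsSymm)
    (hRpos : ∀ x : Fin n → ℝ, x ≠ 0 → 0 < x ⬝ᵥ R.mulVec x)
    (hQsymm : Q.IsSymm)
    (hQpos : ∀ x : Fin n → ℝ, x ≠ 0 → 0 < x ⬝ᵥ Q.mulVec x)
    (hHyp : ∀ ω : ℝ, Complex.I * (ω : ℂ) ∉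
      spectrum ℂ ((Matrix.fromBlocks A R (-Q) (-Aᵀ)).map Complex.ofReal)) :
    ∃ P : Matrix (Fin n) (Fin n) ℝ, P.IsSymm ∧
      (∀ x : Fin n → ℝ, x ≠ 0 → 0 < x ⬝ᵥ P.mulVec x) ∧
      Aᵀ * P + P * A + P * R * P + Q = 0 := by
  have : NeZero n := ⟨by omega⟩
  obtain ⟨P, hPs, hP⟩ := exists_P A R Q hRsymm hRpos hQsymm hHyp
  refine ⟨P, hPs, fun x hx => lyap A P hA hPs (fun x hx => ?_) x hx, hP⟩
  have h1 : x ⬝ᵥ (Aᵀ * P + P * A + P * R * P + Q) *ᵥ x = 0 := by rw [hP]; simp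
  have h2 : x ⬝ᵥ (Aᵀ * P) *ᵥ x = x ⬝ᵥ (P * A) *ᵥ x := by
    rw [← mulVec_mulVec, dotProduct_comm, tr_dot, symm_dot hPs, mulVec_mulVec]
  have h3 : x ⬝ᵥ (P * R * P) *ᵥ x = (P *ᵥ x) ⬝ᵥ R *ᵥ (P *ᵥ x) := by
    rw [symm_dot hPs]; simp [mulVec_mulVec, mul_assoc]
  have h4 : 0 ≤ (P *ᵥ x) ⬝ᵥ R *ᵥ (P *ᵥ x) := by
    by_cases h0 : P *ᵥ x = 0
    · simp [h0]
    · exact (hRpos _ h0).le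
  have h5 := hQpos x hx
  simp only [add_mulVec, dotProduct_add, h2, h3] at h1
  linarith
end

section
/- Let n ≥ 1, let A ∈ M_n(ℝ), and let N > 0 and Ξ > 0 be real numbers. Suppose that for every ω ∈ ℝ, σ_min(A − iωI) > Ξ√N, where A is regarded as a complex n×n matrix. Then there exists a real number ε > 0 such that the 2n×2n matrix fromBlocks A (N·I) (−(Ξ² + ε)·I) (−Aᵀ) is hyperbolic, i.e. regarded as a complex matrix it has no purely imaginary eigenvalue iω with ω ∈ ℝ. -/
open Matrix

lemma norm_sq_aux {n : ℕ} (M : Matrix (Fin n) (Fin n) ℂ) (x : Fin n → ℂ) (c : ℝ)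
    (h : Mᴴ *ᵥ (M *ᵥ x) = (c : ℂ) • x) :
    ‖Matrix.toEuclideanLin M (WithLp.toLp 2 x)‖ ^ 2 = c * ‖(WithLp.toLp 2 x : EuclideanSpace ℂ (Fin n))‖ ^ 2 := by
  have h1 : inner ℂ (Matrix.toEuclideanLin M (WithLp.toLp 2 x)) (Matrix.toEuclideanLin M (WithLp.toLp 2 x))
      = inner ℂ (WithLp.toLp 2 x : EuclideanSpace ℂ (Fin n)) (Matrix.toEuclideanLin Mᴴ (Matrix.toEuclideanLin M (WithLp.toLp 2 x))) := by
    rw [Matrix.toEuclideanLin_conjTranspose_eq_adjoint, LinearMap.adjoint_inner_right]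
  have h2 : Matrix.toEuclideanLin Mᴴ (Matrix.toEuclideanLin M (WithLp.toLp 2 x))
      = (c : ℂ) • (WithLp.toLp 2 x : EuclideanSpace ℂ (Fin n)) := by
    rw [← WithLp.toLp_smul, ← h]
    rfl
  rw [h2, inner_smul_right, inner_self_eq_norm_sq_to_K, inner_self_eq_norm_sq_to_K] at h1
  apply Complex.ofReal_injective
  push_cast
  exact h1

lemma sigmaMin_le {n : ℕ} (M : Matrix (Fin n) (Fin n) ℂ) (v : EuclideanSpace ℂ (Fin n))
    (hv : ‖v‖ = 1) : sigmaMin M ≤ ‖Matrix.toEuclideanLin M v‖ := by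
  refine csInf_le ⟨0, ?_⟩ ⟨v, hv, rfl⟩
  rintro r ⟨w, -, rfl⟩
  exact norm_nonneg _

lemma unif {n : ℕ} (hn : 1 ≤ n) (B : Matrix (Fin n) (Fin n) ℂ) (c : ℝ)
    (h : ∀ ω : ℝ, c < sigmaMin (B - ((ω : ℂ) * Complex.I) • (1 : Matrix (Fin n) (Fin n) ℂ))) :
    ∃ d, c < d ∧ ∀ ω : ℝ, ∀ v : EuclideanSpace ℂ (Fin n), ‖v‖ = 1 →
      d ≤ ‖Matrix.toEuclideanLin (B - ((ω : ℂ) * Complex.I) • (1 : Matrix (Fin n) (Fin n) ℂ)) v‖ := by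
  have e : ∀ (ω : ℝ) (v : EuclideanSpace ℂ (Fin n)),
      Matrix.toEuclideanLin (B - ((ω : ℂ) * Complex.I) • (1 : Matrix (Fin n) (Fin n) ℂ)) v
      = Matrix.toEuclideanCLM (𝕜 := ℂ) B v - ((ω : ℂ) * Complex.I) • v := by
    intro ω v
    ext i
    simp [Matrix.toEuclideanLin_apply, Matrix.sub_mulVec, Matrix.smul_mulVec]
  set T := Matrix.toEuclideanCLM (𝕜 := ℂ) B with hT
  set R : ℝ := ‖T‖ + |c| + 1 with hR
  have hRpos : 0 ≤ R := by positivity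
  have hK : IsCompact (Set.Icc (-R) R ×ˢ Metric.sphere (0 : EuclideanSpace ℂ (Fin n)) 1) :=
    isCompact_Icc.prod (isCompact_sphere _ _)
  have hne : (Set.Icc (-R) R ×ˢ Metric.sphere (0 : EuclideanSpace ℂ (Fin n)) 1).Nonempty := by
    refine ⟨(0, EuclideanSpace.single ⟨0, hn⟩ 1), ⟨by linarith, by linarith⟩, by simp⟩
  obtain ⟨p, hp, hmin⟩ := hK.exists_isMinOn hne
    (f := fun p => ‖T p.2 - ((p.1 : ℂ) * Complex.I) • p.2‖) (by fun_prop)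
  have hp1 : c < ‖T p.2 - ((p.1 : ℂ) * Complex.I) • p.2‖ := by
    rw [← e]
    exact (h p.1).trans_le (sigmaMin_le _ _ (mem_sphere_zero_iff_norm.1 hp.2))
  refine ⟨min ‖T p.2 - ((p.1 : ℂ) * Complex.I) • p.2‖ (c + 1), lt_min hp1 (by linarith), ?_⟩
  intro ω v hv
  rw [e]
  by_cases hω : ω ∈ Set.Icc (-R) R
  · have hmem : (ω, v) ∈ Set.Icc (-R) R ×ˢ Metric.sphere (0 : EuclideanSpace ℂ (Fin n)) 1 :=
      Set.mk_mem_prod hω (mem_sphere_zero_iff_norm.2 hv)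
    have hm := isMinOn_iff.1 hmin (ω, v) hmem
    exact (min_le_left _ _).trans hm
  · refine (min_le_right _ _).trans ?_
    have h1 : R < |ω| := by
      by_contra hh
      exact hω (abs_le.mp (not_lt.mp hh))
    have h2 : ‖((ω : ℂ) * Complex.I) • v‖ = |ω| := by simp [norm_smul, hv]
    have h3 : ‖T v‖ ≤ ‖T‖ := by simpa [hv] using T.le_opNorm v
    have h4 := norm_sub_norm_le (((ω : ℂ) * Complex.I) • v) (T v)
    rw [norm_sub_rev] at h4
    have := le_abs_self c
    linarith

/-- Part I of the proof of Lemma 2: if `σ_min(A − iωI) > Ξ√N` for all `ω ∈ ℝ`, then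
there is a slack `ε > 0` for which the perturbed Hamiltonian matrix
`fromBlocks A (N·I) (−(Ξ²+ε)·I) (−Aᵀ)` remains hyperbolic. -/
theorem stmt_7 (n : ℕ) (hn : 1 ≤ n) (A : Matrix (Fin n) (Fin n) ℝ)
    (N Ξ : ℝ) (hN : 0 < N) (hΞ : 0 < Ξ)
    (hdist : ∀ ω : ℝ, Ξ * Real.sqrt N <
      sigmaMin (A.map Complex.ofReal -
        ((ω : ℂ) * Complex.I) • (1 : Matrix (Fin n) (Fin n) ℂ))) :
    ∃ ε : ℝ, 0 < ε ∧
      ∀ ω : ℝ, Complex.I * (ω : ℂ) ∉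
        spectrum ℂ ((Matrix.fromBlocks A (N • (1 : Matrix (Fin n) (Fin n) ℝ))
          ((-(Ξ ^ 2 + ε)) • (1 : Matrix (Fin n) (Fin n) ℝ)) (-Aᵀ)).map Complex.ofReal) := by
  obtain ⟨d, hd, hlow⟩ := unif hn _ _ hdist
  have hc : 0 ≤ Ξ * Real.sqrt N := by positivity
  have hd2 : Ξ ^ 2 * N < d ^ 2 := by
    have := pow_lt_pow_left₀ hd hc two_ne_zero
    rwa [mul_pow, Real.sq_sqrt hN.le] at this
  refine ⟨(d ^ 2 / N - Ξ ^ 2) / 2, ?_, ?_⟩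
  · have : Ξ ^ 2 < d ^ 2 / N := (lt_div_iff₀ hN).2 hd2
    linarith
  set ε := (d ^ 2 / N - Ξ ^ 2) / 2 with hε
  have hεN : N * (Ξ ^ 2 + ε) < d ^ 2 := by
    have : N * (Ξ ^ 2 + ε) = (d ^ 2 + Ξ ^ 2 * N) / 2 := by
      rw [hε]; field_simp; ring
    linarith
  intro ω hmem
  rw [spectrum.mem_iff, Matrix.isUnit_iff_isUnit_det, isUnit_iff_ne_zero, not_not,
    ← Matrix.exists_mulVec_eq_zero_iff] at hmem
  obtain ⟨z, hz, hz0⟩ := hmem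
  set x : Fin n → ℂ := z ∘ Sum.inl with hx
  set y : Fin n → ℂ := z ∘ Sum.inr with hy
  set B : Matrix (Fin n) (Fin n) ℂ := A.map Complex.ofReal with hB
  have hzz : z = Sum.elim x y := (Sum.elim_comp_inl_inr z).symm
  have hmap : (Matrix.fromBlocks A (N • (1 : Matrix (Fin n) (Fin n) ℝ))
          ((-(Ξ ^ 2 + ε)) • (1 : Matrix (Fin n) (Fin n) ℝ)) (-Aᵀ)).map Complex.ofReal
      = Matrix.fromBlocks B ((N : ℂ) • 1) ((-((Ξ : ℂ) ^ 2 + ε)) • 1) (-Bᴴ) := by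
    rw [Matrix.fromBlocks_map]
    congr 1
    · ext i j; by_cases hij : i = j <;> simp [Matrix.one_apply, hij]
    · ext i j; by_cases hij : i = j <;> simp [Matrix.one_apply, hij]
    · ext i j; simp [hB]
  rw [Matrix.sub_mulVec, sub_eq_zero, Algebra.algebraMap_eq_smul_one, Matrix.smul_mulVec,
    Matrix.one_mulVec, hmap, hzz, Matrix.fromBlocks_mulVec] at hz0
  have e1 : (Complex.I * ω) • x = B *ᵥ x + (N : ℂ) • y := by
    ext i
    have := congrFun hz0 (Sum.inl i)
    simpa [Matrix.smul_mulVec] using this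
  have e2 : (Complex.I * ω) • y = (-((Ξ : ℂ) ^ 2 + ε)) • x - Bᴴ *ᵥ y := by
    ext i
    have := congrFun hz0 (Sum.inr i)
    simpa [Matrix.smul_mulVec, Matrix.neg_mulVec, sub_eq_add_neg] using this
  set M := B - ((ω : ℂ) * Complex.I) • (1 : Matrix (Fin n) (Fin n) ℂ) with hM
  have m1 : M *ᵥ x = -(N : ℂ) • y := by
    rw [hM, Matrix.sub_mulVec, Matrix.smul_mulVec, Matrix.one_mulVec, mul_comm, e1, neg_smul]
    abel
  have m2 : Mᴴ *ᵥ y = -((Ξ : ℂ) ^ 2 + ε) • x := by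
    have : Mᴴ = Bᴴ + (Complex.I * ω) • 1 := by
      rw [hM]; simp [Matrix.conjTranspose_smul, mul_comm, sub_eq_add_neg]
    rw [this, Matrix.add_mulVec, Matrix.smul_mulVec, Matrix.one_mulVec, e2]
    abel
  have hx0 : x ≠ 0 := by
    intro h0
    apply hz
    have hy0 : y = 0 := by
      rw [h0, Matrix.mulVec_zero] at m1
      have hN' : -(N : ℂ) ≠ 0 := by simpa using hN.ne'
      exact (smul_eq_zero.1 m1.symm).resolve_left hN'
    rw [hzz, h0, hy0]
    ext i; cases i <;> rfl
  have key := norm_sq_aux M x (N * (Ξ ^ 2 + ε)) (by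
    rw [m1, Matrix.mulVec_smul, m2, smul_smul]
    congr 1
    push_cast
    ring)
  set X : EuclideanSpace ℂ (Fin n) := WithLp.toLp 2 x with hX
  have hX0 : 0 < ‖X‖ := by
    rw [norm_pos_iff]
    intro h0
    exact hx0 (by simpa [hX] using h0)
  have hl := hlow ω (((‖X‖⁻¹ : ℝ) : ℂ) • X) (by
    rw [norm_smul, Complex.norm_real, Real.norm_of_nonneg (by positivity)]
    exact inv_mul_cancel₀ hX0.ne')
  rw [map_smul, norm_smul, Complex.norm_real, Real.norm_of_nonneg (by positivity)] at hl
  have hl2 := pow_le_pow_left₀ (hc.trans hd.le) hl 2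
  rw [mul_pow, key, inv_pow] at hl2
  have : (‖X‖ ^ 2)⁻¹ * (N * (Ξ ^ 2 + ε) * ‖X‖ ^ 2) = N * (Ξ ^ 2 + ε) := by
    field_simp
  linarith
end

section
/- Let n ≥ 1, let A ∈ M_n(ℝ), regarded also as a complex n×n matrix, let c, d > 0 be real numbers, let ω ∈ ℝ, and let H = fromBlocks A (c·I) (−d·I) (−Aᵀ) ∈ M_{2n}(ℝ). Then iω is an eigenvalue of H (regarded as a complex matrix) if and only if c·d is an eigenvalue of the positive semidefinite Hermitian matrix (A − iωI)(A − iωI)ᴴ, equivalently if and only if √(cd) is a singular value of A − iωI. -/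
open Matrix

lemma mem_spectrum_iff_vec {m : Type*} [Fintype m] [DecidableEq m] (M : Matrix m m ℂ) (μ : ℂ) :
    μ ∈ spectrum ℂ M ↔ ∃ v : m → ℂ, v ≠ 0 ∧ M.mulVec v = μ • v := by
  rw [spectrum.mem_iff, Matrix.isUnit_iff_isUnit_det, isUnit_iff_ne_zero, not_not,
    ← Matrix.exists_mulVec_eq_zero_iff]
  refine exists_congr fun v => and_congr_right fun _ => ?_
  rw [Matrix.sub_mulVec, sub_eq_zero, Algebra.algebraMap_eq_smul_one, Matrix.smul_mulVec,
    Matrix.one_mulVec]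
  exact eq_comm

lemma block_eig {m : Type*} [Fintype m] [DecidableEq m] (B C : Matrix m m ℂ) (μ c d : ℂ)
    (hd : d ≠ 0) :
    (∃ w : m ⊕ m → ℂ, w ≠ 0 ∧ (Matrix.fromBlocks (B + μ • 1) (c • (1 : Matrix m m ℂ))
      ((-d) • (1 : Matrix m m ℂ)) (μ • 1 - C)).mulVec w = μ • w) ↔
    ∃ v : m → ℂ, v ≠ 0 ∧ (B * C).mulVec v = (c * d) • v := by
  constructor
  · rintro ⟨w, hw, h⟩
    obtain ⟨x, y, rfl⟩ : ∃ x y, w = Sum.elim x y := ⟨w ∘ Sum.inl, w ∘ Sum.inr, by simp⟩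
    rw [Matrix.fromBlocks_mulVec] at h
    simp only [Sum.elim_comp_inl, Sum.elim_comp_inr, Matrix.add_mulVec, Matrix.sub_mulVec,
      Matrix.smul_mulVec, Matrix.one_mulVec] at h
    have h1 : B.mulVec x = -(c • y) := by
      ext i
      have := congrFun h (Sum.inl i)
      simp at this ⊢
      linear_combination this
    have h2 : C.mulVec y = -(d • x) := by
      ext i
      have := congrFun h (Sum.inr i)
      simp at this ⊢
      linear_combination -this
    refine ⟨y, ?_, ?_⟩
    · rintro rfl
      apply hw
      have : x = 0 := by
        rw [Matrix.mulVec_zero] at h2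
        simpa [hd] using h2.symm
      subst this
      ext i; cases i <;> rfl
    · rw [← Matrix.mulVec_mulVec, h2, Matrix.mulVec_neg, Matrix.mulVec_smul, h1, smul_neg, neg_neg,
        smul_smul, mul_comm]
  · rintro ⟨y, hy, h⟩
    refine ⟨Sum.elim (-(d⁻¹ • C.mulVec y)) y, ?_, ?_⟩
    · intro h0
      exact hy (funext fun i => congrFun h0 (Sum.inr i))
    · rw [← Matrix.mulVec_mulVec] at h
      rw [Matrix.fromBlocks_mulVec]
      simp only [Sum.elim_comp_inl, Sum.elim_comp_inr, Matrix.add_mulVec, Matrix.sub_mulVec,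
        Matrix.smul_mulVec, Matrix.one_mulVec, Matrix.mulVec_neg, Matrix.mulVec_smul,
        h]
      ext i
      rcases i with i | i
      · simp
        field_simp
        ring
      · simp
        field_simp
        ring

/-- The eigenvalue characterization underlying the proof of Lemma 2: `iω` is an
eigenvalue of the Hamiltonian `fromBlocks A (c·I) (−d·I) (−Aᵀ)` if and only if `cd` is
an eigenvalue of `(A − iωI)(A − iωI)ᴴ`, equivalently if and only if `√(cd)` is a
singular value of `A − iωI` (i.e. `cd` has an eigenvector for `(A − iωI)(A − iωI)ᴴ`). -/
theorem stmt_9 (n : ℕ) (hn : 1 ≤ n) (A : Matrix (Fin n) (Fin n) ℝ) (c d : ℝ)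
    (hc : 0 < c) (hd : 0 < d) (ω : ℝ) :
    (Complex.I * (ω : ℂ) ∈
        spectrum ℂ ((Matrix.fromBlocks A (c • (1 : Matrix (Fin n) (Fin n) ℝ))
          ((-d) • (1 : Matrix (Fin n) (Fin n) ℝ)) (-Aᵀ)).map Complex.ofReal) ↔
      ((c * d : ℝ) : ℂ) ∈
        spectrum ℂ
          ((A.map Complex.ofReal - ((ω : ℂ) * Complex.I) • (1 : Matrix (Fin n) (Fin n) ℂ)) *
            (A.map Complex.ofReal - ((ω : ℂ) * Complex.I) • (1 : Matrix (Fin n) (Fin n) ℂ))ᴴ)) ∧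
    (((c * d : ℝ) : ℂ) ∈
        spectrum ℂ
          ((A.map Complex.ofReal - ((ω : ℂ) * Complex.I) • (1 : Matrix (Fin n) (Fin n) ℂ)) *
            (A.map Complex.ofReal - ((ω : ℂ) * Complex.I) • (1 : Matrix (Fin n) (Fin n) ℂ))ᴴ) ↔
      ∃ v : Fin n → ℂ, v ≠ 0 ∧
        ((A.map Complex.ofReal - ((ω : ℂ) * Complex.I) • (1 : Matrix (Fin n) (Fin n) ℂ)) *
            (A.map Complex.ofReal -
              ((ω : ℂ) * Complex.I) • (1 : Matrix (Fin n) (Fin n) ℂ))ᴴ).mulVec v =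
          ((c * d : ℝ) : ℂ) • v) := by
  refine ⟨?_, mem_spectrum_iff_vec _ _⟩
  rw [mem_spectrum_iff_vec, mem_spectrum_iff_vec, Complex.ofReal_mul,
    ← block_eig _ _ (Complex.I * (ω : ℂ)) (c : ℂ) (d : ℂ) (by exact_mod_cast hd.ne')]
  have hM : (Matrix.fromBlocks A (c • (1 : Matrix (Fin n) (Fin n) ℝ))
          ((-d) • (1 : Matrix (Fin n) (Fin n) ℝ)) (-Aᵀ)).map Complex.ofReal =
      Matrix.fromBlocks
        ((A.map Complex.ofReal - ((ω : ℂ) * Complex.I) • (1 : Matrix (Fin n) (Fin n) ℂ)) +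
          (Complex.I * (ω : ℂ)) • 1) ((c : ℂ) • (1 : Matrix (Fin n) (Fin n) ℂ))
        ((-(d : ℂ)) • (1 : Matrix (Fin n) (Fin n) ℂ))
        ((Complex.I * (ω : ℂ)) • 1 -
          (A.map Complex.ofReal - ((ω : ℂ) * Complex.I) • (1 : Matrix (Fin n) (Fin n) ℂ))ᴴ) := by
    rw [Matrix.fromBlocks_map]
    congr 1
    · rw [mul_comm]; simp
    · ext i j; by_cases hij : i = j <;> simp [Matrix.one_apply, hij]
    · ext i j; by_cases hij : i = j <;> simp [Matrix.one_apply, hij]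
    · ext i j
      by_cases hij : i = j
      · simp [Matrix.one_apply, hij]; ring
      · simp [Matrix.one_apply, hij, Ne.symm hij]
  rw [hM]
end

section
/- Let n ≥ 1, let A ∈ M_n(ℝ) be Hurwitz, let X ∈ M_n(ℝ) be symmetric, and let S ∈ M_n(ℝ) be symmetric positive definite with AᵀX + XA + S = 0. Then X is positive definite. -/
open Matrix

section helpers
attribute [local instance] Matrix.linftyOpNormedRing Matrix.linftyOpNormedAlgebra

open Filter Topology in
lemma pow_tendsto_zero_aux {E : Type*} [NormedRing E] [NormedAlgebra ℂ E] [CompleteSpace E]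
    (b : E) (h : ∀ μ ∈ spectrum ℂ b, ‖μ‖ < 1) :
    Tendsto (fun k : ℕ => b ^ k) atTop (𝓝 0) := by
  have hr : spectralRadius ℂ b < 1 := by
    rcases (spectrum ℂ b).eq_empty_or_nonempty with he | hne
    · simp [spectralRadius, he]
    · refine spectrum.spectralRadius_lt_of_forall_lt_of_nonempty (r := 1) hne ?_
      intro μ hμ
      exact_mod_cast h μ hμ
  obtain ⟨r, hr1, hr2⟩ := exists_between hr
  have hlim := spectrum.pow_nnnorm_pow_one_div_tendsto_nhds_spectralRadius b
  have hev := hlim.eventually (gt_mem_nhds hr1)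
  lift r to NNReal using (hr2.trans ENNReal.one_lt_top).ne
  have hr2' : (r : ℝ) < 1 := by exact_mod_cast hr2
  have hg : Tendsto (fun k : ℕ => (r : ℝ) ^ k) atTop (𝓝 0) :=
    tendsto_pow_atTop_nhds_zero_of_lt_one r.2 hr2'
  refine squeeze_zero_norm' ?_ hg
  filter_upwards [hev, eventually_gt_atTop 0] with k hk hk0
  have h1 : ((‖b ^ k‖₊ : ENNReal) ^ (1 / k : ℝ)) ^ (k : ℝ) ≤ (r : ENNReal) ^ (k : ℝ) :=
    ENNReal.rpow_le_rpow hk.le (by positivity)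
  rw [← ENNReal.rpow_mul, one_div, inv_mul_cancel₀ (by positivity), ENNReal.rpow_one,
    ENNReal.rpow_natCast] at h1
  exact_mod_cast h1

open Filter Topology in
lemma matrix_pow_tendsto_aux {n : ℕ} (B : Matrix (Fin n) (Fin n) ℝ)
    (h : ∀ μ ∈ spectrum ℂ (B.map Complex.ofReal), ‖μ‖ < 1) (x : Fin n → ℝ) :
    Tendsto (fun k : ℕ => (B ^ k).mulVec x) atTop (𝓝 0) := by
  have h1 : Tendsto (fun k : ℕ => (B.map Complex.ofReal) ^ k) atTop (𝓝 0) := by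
    have : CompleteSpace (Matrix (Fin n) (Fin n) ℂ) := FiniteDimensional.complete ℂ _
    exact pow_tendsto_zero_aux _ h
  have h2 : Tendsto (fun k : ℕ => B ^ k) atTop (𝓝 0) := by
    have hc : Continuous (fun M : Matrix (Fin n) (Fin n) ℂ => M.map Complex.re) :=
      continuous_id.matrix_map Complex.continuous_re
    have := (hc.tendsto 0).comp h1
    convert this using 2 with k
    · have : (B.map Complex.ofReal) ^ k = (B ^ k).map Complex.ofReal :=
        (map_pow (Complex.ofRealHom.mapMatrix) B k).symm
      ext i j
      simp [this]
    · ext i j; simp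
  have hc : Continuous (fun M : Matrix (Fin n) (Fin n) ℝ => M.mulVec x) :=
    continuous_id.matrix_mulVec continuous_const
  have h3 := (hc.tendsto 0).comp h2
  rw [zero_mulVec] at h3
  exact h3

end helpers

lemma cayley_aux {n : ℕ} (A C : Matrix (Fin n) (Fin n) ℂ)
    (hA : ∀ μ ∈ spectrum ℂ A, μ.re < 0) (hC : (1 - A) * C = 1) :
    ∀ μ ∈ spectrum ℂ ((1 + A) * C), ‖μ‖ < 1 := by
  intro μ hμ
  by_contra hlt
  push Not at hlt
  apply hμ
  have hCu : IsUnit C := IsUnit.of_mul_eq_one_right _ hC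
  have key : algebraMap ℂ (Matrix (Fin n) (Fin n) ℂ) μ - (1 + A) * C
      = ((μ - 1) • 1 - (μ + 1) • A) * C := by
    have : algebraMap ℂ (Matrix (Fin n) (Fin n) ℂ) μ = (μ • (1 - A)) * C := by
      rw [smul_mul_assoc, hC, Algebra.algebraMap_eq_smul_one]
    rw [this, ← sub_mul]
    congr 1
    module
  rw [spectrum.mem_resolventSet_iff, key]
  refine IsUnit.mul ?_ hCu
  by_cases h1 : μ + 1 = 0
  · rw [h1, zero_smul, sub_zero]
    have : μ - 1 ≠ 0 := by
      intro h2
      have : (2 : ℂ) = 0 := by linear_combination h1 - h2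
      norm_num at this
    rw [← Algebra.algebraMap_eq_smul_one]
    exact (IsUnit.mk0 _ this).map _
  · have hns : (μ - 1) / (μ + 1) ∉ spectrum ℂ A := by
      intro hm
      have h2 := hA _ hm
      have hq : ((μ - 1) / (μ + 1)).re = (Complex.normSq μ - 1) / Complex.normSq (μ + 1) := by
        rw [Complex.div_re, ← add_div]
        congr 1
        simp [Complex.normSq_apply]
        ring
      rw [hq, Complex.normSq_eq_norm_sq μ] at h2
      have h3 : 0 ≤ (‖μ‖ ^ 2 - 1) / Complex.normSq (μ + 1) :=
        div_nonneg (by nlinarith) (Complex.normSq_nonneg _)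
      linarith
    have hun := spectrum.notMem_iff.1 hns
    have e : (μ - 1) • (1 : Matrix (Fin n) (Fin n) ℂ) - (μ + 1) • A
        = algebraMap ℂ _ (μ + 1) * (algebraMap ℂ _ ((μ - 1) / (μ + 1)) - A) := by
      rw [← Algebra.smul_def, smul_sub, Algebra.algebraMap_eq_smul_one, smul_smul,
        mul_div_cancel₀ _ h1]
    rw [e]
    exact ((IsUnit.mk0 _ h1).map _).mul hun

/-- Part II of the proof of Lemma 2: a symmetric solution `X` of the Lyapunov equation
`AᵀX + XA + S = 0` with `A` Hurwitz and `S` symmetric positive definite is positive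
definite. -/
theorem stmt_11 (n : ℕ) (hn : 1 ≤ n) (A X S : Matrix (Fin n) (Fin n) ℝ)
    (hA : IsHurwitz A)
    (hXsymm : X.IsSymm)
    (hSsymm : S.IsSymm)
    (hSpos : ∀ x : Fin n → ℝ, x ≠ 0 → 0 < x ⬝ᵥ S.mulVec x)
    (hLyap : Aᵀ * X + X * A + S = 0) :
    ∀ x : Fin n → ℝ, x ≠ 0 → 0 < x ⬝ᵥ X.mulVec x := by
  have hu : IsUnit (1 - A.map Complex.ofReal) := by
    have : (1 : ℂ) ∉ spectrum ℂ (A.map Complex.ofReal) := by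
      intro h
      have := hA 1 h
      norm_num at this
    simpa using spectrum.notMem_iff.1 this
  have hmap : (1 - A.map Complex.ofReal) = (1 - A).map Complex.ofReal := by
    have := map_sub (Complex.ofRealHom.mapMatrix) (1 : Matrix (Fin n) (Fin n) ℝ) A
    rw [map_one] at this
    exact this.symm
  have hdet : IsUnit (1 - A).det := by
    rw [hmap, Matrix.isUnit_iff_isUnit_det] at hu
    have h3 : ((1 - A).map Complex.ofReal).det = ((1 - A).det : ℂ) :=
      (Complex.ofRealHom.map_det (1 - A)).symm
    rw [h3] at hu
    simpa using hu
  obtain ⟨C, hC⟩ : ∃ C, (1 - A) * C = 1 := ⟨_, Matrix.mul_nonsing_inv _ hdet⟩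
  set B := (1 + A) * C with hB
  have hspec : ∀ μ ∈ spectrum ℂ (B.map Complex.ofReal), ‖μ‖ < 1 := by
    have e1 : B.map Complex.ofReal = (1 + A.map Complex.ofReal) * C.map Complex.ofReal := by
      have := map_mul (Complex.ofRealHom.mapMatrix) (1 + A) C
      rw [map_add, map_one] at this
      exact this
    have e2 : (1 - A.map Complex.ofReal) * C.map Complex.ofReal = 1 := by
      have := map_mul (Complex.ofRealHom.mapMatrix) (1 - A) C
      rw [hC, map_sub, map_one] at this
      exact this.symm
    rw [e1]
    exact cayley_aux _ _ hA e2
  have hdec : ∀ x : Fin n → ℝ, x ≠ 0 →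
      (B.mulVec x) ⬝ᵥ X.mulVec (B.mulVec x) < x ⬝ᵥ X.mulVec x := by
    intro x hx
    set w := C.mulVec x with hw
    have hxw : x = w - A.mulVec w := by
      have : x = ((1 - A) * C).mulVec x := by rw [hC, one_mulVec]
      rw [← mulVec_mulVec, sub_mulVec, one_mulVec] at this
      exact this
    have hBx : B.mulVec x = w + A.mulVec w := by
      rw [hB, ← mulVec_mulVec, add_mulVec, one_mulVec]
    have hw0 : w ≠ 0 := by
      intro h; apply hx; rw [hxw, h]; simp
    have hS := hSpos w hw0
    have hL : w ⬝ᵥ (Aᵀ * X + X * A + S).mulVec w = 0 := by rw [hLyap]; simp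
    rw [add_mulVec, add_mulVec, dotProduct_add, dotProduct_add, ← mulVec_mulVec,
      ← mulVec_mulVec, dotProduct_mulVec w Aᵀ, vecMul_transpose] at hL
    rw [hBx]
    generalize A.mulVec w = v at *
    rw [hxw]
    simp only [mulVec_add, mulVec_sub, dotProduct_add, dotProduct_sub, add_dotProduct,
      sub_dotProduct]
    linarith
  have hle : ∀ x : Fin n → ℝ,
      (B.mulVec x) ⬝ᵥ X.mulVec (B.mulVec x) ≤ x ⬝ᵥ X.mulVec x := by
    intro x
    by_cases hx : x = 0
    · simp [hx]
    · exact (hdec x hx).le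
  have hpow : ∀ (k : ℕ) (x : Fin n → ℝ),
      ((B ^ k).mulVec x) ⬝ᵥ X.mulVec ((B ^ k).mulVec x) ≤ x ⬝ᵥ X.mulVec x := by
    intro k x
    induction k with
    | zero => simp
    | succ k ih =>
      rw [pow_succ', ← mulVec_mulVec]
      exact (hle _).trans ih
  have hnn : ∀ x : Fin n → ℝ, 0 ≤ x ⬝ᵥ X.mulVec x := by
    intro x
    have ht := matrix_pow_tendsto_aux B hspec x
    have hc : Continuous (fun y : Fin n → ℝ => y ⬝ᵥ X.mulVec y) :=
      continuous_id.dotProduct (continuous_const.matrix_mulVec continuous_id)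
    have h0 := (hc.tendsto 0).comp ht
    simp only [zero_dotProduct] at h0
    exact le_of_tendsto' h0 (fun k => hpow k x)
  intro x hx
  exact (hnn _).trans_lt (hdec x hx)
end

section
/- Let k ≥ 1, let θ_max > 0 and ε₀ > 0 be real numbers, and on ℝ^k define g(θ) = ((ε₀+1)‖θ‖² − θ_max²)/(ε₀ θ_max²) and ∇g(θ) = 2(ε₀+1)θ/(ε₀ θ_max²). Define the projection operator Proj : ℝ^k × ℝ^k → ℝ^k by: Proj(θ, y) = y if g(θ) < 0, or if g(θ) ≥ 0 and ⟨∇g(θ), y⟩ ≤ 0; and Proj(θ, y) = y − (∇g(θ)/‖∇g(θ)‖) · ⟨∇g(θ)/‖∇g(θ)‖, y⟩ · g(θ) if g(θ) ≥ 0 and ⟨∇g(θ), y⟩ > 0. Then for every θ* ∈ ℝ^k with g(θ*) ≤ 0, every θ ∈ ℝ^k, and every y ∈ ℝ^k: ⟨θ − θ*, Proj(θ, y) − y⟩ ≤ 0. -/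
open scoped RealInnerProductSpace

/-- The convex function `g` defining the projection boundary. -/
noncomputable def projG (k : ℕ) (θmax ε₀ : ℝ) (θ : EuclideanSpace ℝ (Fin k)) : ℝ :=
  ((ε₀ + 1) * ‖θ‖ ^ 2 - θmax ^ 2) / (ε₀ * θmax ^ 2)

/-- The gradient of `g`. -/
noncomputable def projGrad (k : ℕ) (θmax ε₀ : ℝ) (θ : EuclideanSpace ℝ (Fin k)) :
    EuclideanSpace ℝ (Fin k) :=
  (2 * (ε₀ + 1) / (ε₀ * θmax ^ 2)) • θ

/-- The projection operator: `Proj(θ, y) = y` if `g(θ) < 0`, or if `g(θ) ≥ 0` and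
`⟨∇g(θ), y⟩ ≤ 0`; otherwise `Proj(θ, y) = y − (∇g/‖∇g‖)·⟨∇g/‖∇g‖, y⟩·g(θ)`. -/
noncomputable def projOp (k : ℕ) (θmax ε₀ : ℝ) (θ y : EuclideanSpace ℝ (Fin k)) :
    EuclideanSpace ℝ (Fin k) :=
  if 0 ≤ projG k θmax ε₀ θ ∧ 0 < ⟪projGrad k θmax ε₀ θ, y⟫ then
    y - (⟪‖projGrad k θmax ε₀ θ‖⁻¹ • projGrad k θmax ε₀ θ, y⟫ * projG k θmax ε₀ θ) •
      (‖projGrad k θmax ε₀ θ‖⁻¹ • projGrad k θmax ε₀ θ)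
  else y

/-- Property 2 of the projection operator (Appendix 7.4): for every `θ*` with
`g(θ*) ≤ 0`, every `θ` and every `y`, one has `⟨θ − θ*, Proj(θ, y) − y⟩ ≤ 0`. -/
theorem stmt_17 (k : ℕ) (hk : 1 ≤ k) (θmax ε₀ : ℝ) (hθmax : 0 < θmax) (hε₀ : 0 < ε₀) :
    ∀ θstar : EuclideanSpace ℝ (Fin k), projG k θmax ε₀ θstar ≤ 0 →
      ∀ θ y : EuclideanSpace ℝ (Fin k),
        ⟪θ - θstar, projOp k θmax ε₀ θ y - y⟫ ≤ 0 := by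
  intro θstar hstar θ y
  have hd : 0 < ε₀ * θmax ^ 2 := by positivity
  unfold projOp
  split_ifs with h
  · obtain ⟨hg, hy⟩ := h
    have hc : 0 < 2 * (ε₀ + 1) / (ε₀ * θmax ^ 2) := by positivity
    have h1 : (ε₀ + 1) * ‖θstar‖ ^ 2 - θmax ^ 2 ≤ 0 := by
      unfold projG at hstar
      by_contra hcon
      exact absurd hstar (not_le.mpr (div_pos (not_le.mp hcon) hd))
    have h2 : 0 ≤ (ε₀ + 1) * ‖θ‖ ^ 2 - θmax ^ 2 := by
      unfold projG at hg
      by_contra hcon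
      exact absurd hg (not_le.mpr (div_neg_of_neg_of_pos (not_le.mp hcon) hd))
    have h3 : ‖θstar‖ ^ 2 ≤ ‖θ‖ ^ 2 := by
      refine le_of_mul_le_mul_left (a := ε₀ + 1) ?_ (by positivity)
      linarith
    have h4 : ‖θstar‖ ≤ ‖θ‖ := by
      exact (sq_le_sq₀ (norm_nonneg _) (norm_nonneg _)).mp h3
    have h5 : 0 ≤ ⟪θ - θstar, θ⟫ := by
      rw [inner_sub_left, real_inner_self_eq_norm_sq]
      have := real_inner_le_norm θstar θ
      nlinarith [norm_nonneg θ]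
    have h6 : 0 ≤ ⟪θ - θstar, projGrad k θmax ε₀ θ⟫ := by
      unfold projGrad
      rw [real_inner_smul_right]
      exact mul_nonneg hc.le h5
    have h7 : 0 ≤ ‖projGrad k θmax ε₀ θ‖⁻¹ := by positivity
    rw [sub_sub_cancel_left, inner_neg_right, real_inner_smul_right, real_inner_smul_right,
      real_inner_smul_left, neg_nonpos]
    exact mul_nonneg (mul_nonneg (mul_nonneg h7 hy.le) hg) (mul_nonneg h7 h6)
  · simp
end
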